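/- arXiv:1711.08328 — 2 statements merged into one kernel-verified Lean document; each statement's English description precedes it below -/
import Mathlib

section
/- Under Assumption 1, for every true density 𝐬∈𝕃 of X and every ξ>0, there exists a measurable event Ω_ξ with P_𝐬(Ω_ξ) ≥ 1−e^{−ξ} such that for all ω∈Ω_ξ: the map 𝐭↦Ψ(X(ω),𝐭,𝐭′) is 𝒮-measurable on S̄ for every 𝐭′∈S, and for all 𝐭∈S̄ and 𝐭′∈S, Ψ(X(ω),𝐭,𝐭′) ≤ c₇𝐡²(𝐬,𝐭) − c₈𝐡²(𝐬,𝐭′) + c₅(ε^{S̄}(𝐬))² + c₆(ξ+2.4), with c₅=16·10⁻³, c₆=7·10⁴, c₇=4.01 and c₈=0.365. -/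
open MeasureTheory Real Filter Set
open scoped Classical ENNReal

noncomputable section

/-- Squared Hellinger distance `h²(p·ν, q·ν) = (1/2)∫(√p−√q)² dν` between two densities
with respect to the reference measure `ν`. -/
def hellSq {X : Type*} [MeasurableSpace X] (ν : Measure X) (p q : X → ℝ) : ℝ :=
  (1 / 2) * ∫ x, (Real.sqrt (p x) - Real.sqrt (q x)) ^ 2 ∂ν

/-- Hellinger-type distance `𝐡` between `n`-tuples of densities:
`𝐡²(𝐭,𝐭′)=Σᵢ h²(tᵢ·μᵢ, tᵢ′·μᵢ)`. -/
def bH {n : ℕ} {𝒳 : Fin n → Type*} [∀ i, MeasurableSpace (𝒳 i)]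
    (μ : ∀ i, Measure (𝒳 i)) (t t' : ∀ i, 𝒳 i → ℝ) : ℝ :=
  Real.sqrt (∑ i, hellSq (μ i) (t i) (t' i))

/-- `ψ(√(b/a))` where `ψ(x)=(x−1)/(x+1)`, `ψ(+∞)=1`, with the conventions
`a/0 = +∞` for `a>0` and `0/0 = 1`. -/
def psiR (a b : ℝ) : ℝ :=
  if a = 0 then (if b = 0 then 0 else 1)
  else (Real.sqrt (b / a) - 1) / (Real.sqrt (b / a) + 1)

/-- `Ψ(𝐱,𝐭,𝐭′) = Σᵢ ψ(√(tᵢ′(xᵢ)/tᵢ(xᵢ)))`. -/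
def Psi {n : ℕ} {𝒳 : Fin n → Type*} (x : ∀ i, 𝒳 i) (t t' : ∀ i, 𝒳 i → ℝ) : ℝ :=
  ∑ i, psiR (t i (x i)) (t' i (x i))

/-- `t` is an `n`-tuple of probability densities with respect to the `μ i`'s, i.e. an
element of `𝕃 = ∏ᵢ ℒᵢ`. -/
def IsDensityT {n : ℕ} {𝒳 : Fin n → Type*} [∀ i, MeasurableSpace (𝒳 i)]
    (μ : ∀ i, Measure (𝒳 i)) (t : ∀ i, 𝒳 i → ℝ) : Prop :=
  ∀ i, Measurable (t i) ∧ (∀ x, 0 ≤ t i x) ∧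
    ∫⁻ x, ENNReal.ofReal (t i x) ∂(μ i) = 1

/-- The law `P_𝐬 = ⊗ᵢ (sᵢ·μᵢ)` of `X=(X₁,…,Xₙ)`. -/
def Plaw {n : ℕ} {𝒳 : Fin n → Type*} [∀ i, MeasurableSpace (𝒳 i)]
    (μ : ∀ i, Measure (𝒳 i)) (s : ∀ i, 𝒳 i → ℝ) : Measure (∀ i, 𝒳 i) :=
  Measure.pi fun i => (μ i).withDensity fun x => ENNReal.ofReal (s i x)

/-- `𝐰^{S̄}(𝐬,y)`: expectation under `P_𝐬` of the supremum of the centred process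
`|Ψ(X,𝐭,𝐭′)−E_𝐬Ψ(X,𝐭,𝐭′)|` over pairs `𝐭,𝐭′` in the Hellinger ball of radius `y`
of the countable set `S`, with the convention that the supremum over ∅ is 1. -/
def wS {n : ℕ} {𝒳 : Fin n → Type*} [∀ i, MeasurableSpace (𝒳 i)]
    (μ : ∀ i, Measure (𝒳 i)) (s : ∀ i, 𝒳 i → ℝ) (S : Set (∀ i, 𝒳 i → ℝ)) (y : ℝ) : ℝ :=
  if Nonempty {p : (∀ i, 𝒳 i → ℝ) × (∀ i, 𝒳 i → ℝ) //
      p.1 ∈ S ∧ p.2 ∈ S ∧ bH μ s p.1 ≤ y ∧ bH μ s p.2 ≤ y} then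
    ∫ x, (⨆ p : {p : (∀ i, 𝒳 i → ℝ) × (∀ i, 𝒳 i → ℝ) //
        p.1 ∈ S ∧ p.2 ∈ S ∧ bH μ s p.1 ≤ y ∧ bH μ s p.2 ≤ y},
      |Psi x p.1.1 p.1.2 - ∫ x', Psi x' p.1.1 p.1.2 ∂(Plaw μ s)|) ∂(Plaw μ s)
  else 1

/-- `ε^{S̄}(𝐬) = sup{y ≥ 1 : 𝐰^{S̄}(𝐬,y) > 6c₀⁻¹y²}` with `c₀ = 1000`. -/
def epsS {n : ℕ} {𝒳 : Fin n → Type*} [∀ i, MeasurableSpace (𝒳 i)]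
    (μ : ∀ i, Measure (𝒳 i)) (s : ∀ i, 𝒳 i → ℝ) (S : Set (∀ i, 𝒳 i → ℝ)) : ℝ :=
  sSup {y : ℝ | 1 ≤ y ∧ 6 / 1000 * y ^ 2 < wS μ s S y}

/-!
For `𝐭` and `𝐭′` in `S`, the mean of `Ψ(X,𝐭,𝐭′)` is at most `4𝐡²(𝐬,𝐭) − (3/8)𝐡²(𝐬,𝐭′)` and its
variance at most `2𝐡²(𝐬,𝐭) + 2𝐡²(𝐬,𝐭′)`, both by integrating pointwise inequalities between square
roots. It remains to bound the centred process by `0.01(𝐡²(𝐬,𝐭) + 𝐡²(𝐬,𝐭′))` up to the error terms.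

On a Hellinger ball of radius `y > ε^{S̄}(𝐬)` the expected supremum is at most `0.006 y²`, so a
concentration inequality of Talagrand's type suffices. Adding `c` times the variance to each centred
summand `f` produces a class with `E f² ≤ C E f`; the supremum of such a class is self-bounding, and
tensorization of entropy followed by Herbst's argument bounds its Laplace transform. A union bound
over a geometric grid of radii makes the estimate uniform over `S`, and the triangle inequality for
`𝐡` extends it along the approximating sequences to `S̄`.
-/

/-- Everywhere bounded measurable real functions: a class of test functions that is integrable
against every finite measure and stable under all the operations needed below. -/
structure BddMeasurable {α : Type*} [MeasurableSpace α] (f : α → ℝ) : Prop where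
  measurable : Measurable f
  exists_abs_le : ∃ C, ∀ x, |f x| ≤ C

namespace BddMeasurable

variable {α β : Type*} [MeasurableSpace α] [MeasurableSpace β] {f g : α → ℝ}

theorem integrable (hf : BddMeasurable f) (ν : Measure α) [IsFiniteMeasure ν] : Integrable f ν :=
  let ⟨C, hC⟩ := hf.exists_abs_le
  Integrable.of_bound hf.measurable.aestronglyMeasurable C (Eventually.of_forall hC)

theorem const (c : ℝ) : BddMeasurable fun _ : α => c :=
  ⟨measurable_const, |c|, fun _ => le_rfl⟩

theorem add (hf : BddMeasurable f) (hg : BddMeasurable g) : BddMeasurable fun x => f x + g x := by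
  obtain ⟨C, hC⟩ := hf.exists_abs_le
  obtain ⟨D, hD⟩ := hg.exists_abs_le
  exact ⟨hf.measurable.add hg.measurable, C + D,
    fun x => (abs_add_le _ _).trans (add_le_add (hC x) (hD x))⟩

theorem mul (hf : BddMeasurable f) (hg : BddMeasurable g) : BddMeasurable fun x => f x * g x := by
  obtain ⟨C, hC⟩ := hf.exists_abs_le
  obtain ⟨D, hD⟩ := hg.exists_abs_le
  refine ⟨hf.measurable.mul hg.measurable, C * D, fun x => ?_⟩
  rw [abs_mul]
  exact mul_le_mul (hC x) (hD x) (abs_nonneg _) ((abs_nonneg _).trans (hC x))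

theorem const_mul (hf : BddMeasurable f) (c : ℝ) : BddMeasurable fun x => c * f x :=
  (const c).mul hf

theorem sub (hf : BddMeasurable f) (hg : BddMeasurable g) : BddMeasurable fun x => f x - g x := by
  simpa [sub_eq_add_neg] using hf.add (hg.const_mul (-1))

theorem sq (hf : BddMeasurable f) : BddMeasurable fun x => f x ^ 2 := by
  simpa only [_root_.sq] using hf.mul hf

theorem exp (hf : BddMeasurable f) : BddMeasurable fun x => Real.exp (f x) := by
  obtain ⟨C, hC⟩ := hf.exists_abs_le
  refine ⟨hf.measurable.exp, Real.exp C, fun x => ?_⟩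
  rw [Real.abs_exp]
  exact Real.exp_le_exp.2 ((le_abs_self _).trans (hC x))

theorem log (hf : BddMeasurable f) {c : ℝ} (hc : 0 < c) (hcf : ∀ x, c ≤ f x) :
    BddMeasurable fun x => Real.log (f x) := by
  obtain ⟨C, hC⟩ := hf.exists_abs_le
  refine ⟨hf.measurable.log, max |Real.log c| |Real.log C|, fun x => abs_le_max_abs_abs ?_ ?_⟩
  · exact Real.log_le_log hc (hcf x)
  · exact Real.log_le_log (hc.trans_le (hcf x)) ((le_abs_self _).trans (hC x))

theorem comp (hf : BddMeasurable f) {φ : β → α} (hφ : Measurable φ) :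
    BddMeasurable fun x => f (φ x) :=
  let ⟨C, hC⟩ := hf.exists_abs_le
  ⟨hf.measurable.comp hφ, C, fun x => hC (φ x)⟩

theorem sum {ι : Type*} (s : Finset ι) {f : ι → α → ℝ} (hf : ∀ i, BddMeasurable (f i)) :
    BddMeasurable fun x => ∑ i ∈ s, f i x := by
  choose C hC using fun i => (hf i).exists_abs_le
  exact ⟨Finset.measurable_fun_sum s fun i _ => (hf i).measurable, ∑ i ∈ s, C i,
    fun x => (Finset.abs_sum_le_sum_abs _ _).trans (Finset.sum_le_sum fun i _ => hC i x)⟩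

theorem integral_prod_right {f : α × β → ℝ} (hf : BddMeasurable f) (ν : Measure β)
    [IsProbabilityMeasure ν] : BddMeasurable fun x => ∫ y, f (x, y) ∂ν := by
  obtain ⟨C, hC⟩ := hf.exists_abs_le
  refine ⟨hf.measurable.stronglyMeasurable.integral_prod_right'.measurable, C, fun x => ?_⟩
  simpa using norm_integral_le_of_norm_le_const (μ := ν) (f := fun y => f (x, y))
    (Eventually.of_forall fun y => hC (x, y))

theorem iSup {κ : Type*} [Countable κ] {f : κ → α → ℝ} (hf : ∀ a, Measurable (f a)) {C : ℝ}
    (hC : ∀ a x, |f a x| ≤ C) : BddMeasurable fun x => ⨆ a, f a x := by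
  refine ⟨Measurable.iSup hf, |C|, fun x => ?_⟩
  rcases isEmpty_or_nonempty κ with hκ | ⟨⟨a⟩⟩
  · simp
  · have hbdd : BddAbove (range fun a => f a x) :=
      ⟨C, forall_mem_range.2 fun a => (abs_le.1 (hC a x)).2⟩
    have : Nonempty κ := ⟨a⟩
    exact (abs_le.2 ⟨(abs_le.1 (hC a x)).1.trans (le_ciSup hbdd a),
      ciSup_le fun a => (abs_le.1 (hC a x)).2⟩).trans (le_abs_self C)

end BddMeasurable

section ExpEntropy

variable {α : Type*} [MeasurableSpace α] {ν : Measure α} [IsProbabilityMeasure ν] {z : α → ℝ}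

/-- The entropy `Ent(e^z) = E[z e^z] - E[e^z] log E[e^z]` of the exponential of `z`. -/
def expEntropy {α : Type*} [MeasurableSpace α] (ν : Measure α) (z : α → ℝ) : ℝ :=
  ∫ y, exp (z y) * z y ∂ν - (∫ y, exp (z y) ∂ν) * log (∫ y, exp (z y) ∂ν)

theorem integral_exp_mul_sub_le_expEntropy (hz : BddMeasurable z) {g : α → ℝ}
    (hg : BddMeasurable g) :
    ∫ y, exp (z y) * (g y - log (∫ y', exp (g y') ∂ν)) ∂ν ≤ expEntropy ν z := by
  set H := ∫ y, exp (z y) ∂ν with hH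
  set m := ∫ y, exp (g y) ∂ν with hm
  have hH0 : 0 < H := integral_exp_pos (hz.exp.integrable ν)
  have hm0 : 0 < m := integral_exp_pos (hg.exp.integrable ν)
  have pointwise (y : α) : exp (z y) * (g y - log m) ≤
      exp (z y) * z y - log H * exp (z y) + (H / m * exp (g y) - exp (z y)) := by
    have tangent := mul_le_mul_of_nonneg_left
      (add_one_le_exp (g y - log m - z y + log H)) (exp_pos (z y)).le
    have : exp (z y) * exp (g y - log m - z y + log H) = H / m * exp (g y) := by
      rw [exp_add, exp_sub, exp_sub, exp_log hH0, exp_log hm0]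
      field_simp
    linarith
  have left := (hz.exp.mul hz).sub (hz.exp.const_mul (log H))
  have right := (hg.exp.const_mul (H / m)).sub hz.exp
  calc ∫ y, exp (z y) * (g y - log m) ∂ν
      ≤ ∫ y, (exp (z y) * z y - log H * exp (z y) + (H / m * exp (g y) - exp (z y))) ∂ν :=
        integral_mono ((hz.exp.mul (hg.sub (.const _))).integrable ν)
          ((left.add right).integrable ν) pointwise
    _ = expEntropy ν z := by
        rw [integral_add (left.integrable ν) (right.integrable ν),
          integral_sub ((hz.exp.mul hz).integrable ν) ((hz.exp.const_mul _).integrable ν),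
          integral_sub ((hg.exp.const_mul _).integrable ν) (hz.exp.integrable ν),
          integral_const_mul, integral_const_mul, ← hH, ← hm, div_mul_cancel₀ _ hm0.ne', expEntropy,
          ← hH]
        ring

theorem expEntropy_le_integral (hz : BddMeasurable z) (c : ℝ) :
    expEntropy ν z ≤ ∫ y, (exp (z y) * (z y - c) - exp (z y) + exp c) ∂ν := by
  set H := ∫ y, exp (z y) ∂ν with hH
  have hH0 : 0 < H := integral_exp_pos (hz.exp.integrable ν)
  have tangent : H * (c - log H + 1) ≤ exp c := by
    have := mul_le_mul_of_nonneg_left (add_one_le_exp (c - log H)) hH0.le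
    rwa [exp_sub, exp_log hH0, mul_div_cancel₀ _ hH0.ne'] at this
  have hez := hz.exp
  have hezz := hz.exp.mul hz
  have expand : ∫ y, (exp (z y) * (z y - c) - exp (z y) + exp c) ∂ν =
      ∫ y, exp (z y) * z y ∂ν - c * H - H + exp c := by
    simp only [mul_sub, mul_comm _ c]
    rw [integral_add (((hezz.sub (hez.const_mul c)).sub hez).integrable ν) (integrable_const _),
      integral_sub ((hezz.sub (hez.const_mul c)).integrable ν) (hez.integrable ν),
      integral_sub (hezz.integrable ν) ((hez.const_mul c).integrable ν),
      integral_const_mul, integral_const, probReal_univ, one_smul]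
  rw [expand, expEntropy, ← hH]
  linarith

theorem exp_mul_sub_exp_add_one_le_sq {x : ℝ} (hx : x ≤ 1) : exp x * x - exp x + 1 ≤ x ^ 2 := by
  nlinarith [mul_le_mul_of_nonneg_right (add_one_le_exp x) (sub_nonneg.2 hx)]

theorem exp_mul_sub_exp_add_exp_le {C l v c : ℝ} (hl : 0 ≤ l) (hlC : l * C ≤ 2)
    {w : ℝ} (hvw : v ≤ w - c) (hwC : 2 * (w - c) ≤ C) (hC : 0 ≤ C) :
    exp (l * w) * (l * w - l * c) - exp (l * w) + exp (l * c) ≤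
      l ^ 2 * (C * (exp (l * w) * (w - c)) + exp (l * c) * (v ^ 2 - C * v)) := by
  set V := w - c with hV
  have hexp : exp (l * w) = exp (l * c) * exp (l * V) := by rw [← exp_add, hV]; ring_nf
  have quadratic : exp (l * V) * (l * V) - exp (l * V) + 1 ≤ (l * V) ^ 2 :=
    exp_mul_sub_exp_add_one_le_sq (by nlinarith)
  have exchange : V ^ 2 ≤ v ^ 2 + C * (V - v) := by nlinarith
  have tilt : V ≤ exp (l * V) * V := by
    rcases le_total 0 V with h | h
    · nlinarith [one_le_exp (mul_nonneg hl h)]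
    · nlinarith [exp_le_one_iff.2 (mul_nonpos_of_nonneg_of_nonpos hl h)]
  have : exp (l * V) * (l * V) - exp (l * V) + 1 ≤
      l ^ 2 * (C * (exp (l * V) * V) + (v ^ 2 - C * v)) := by
    nlinarith [mul_le_mul_of_nonneg_left tilt hC, sq_nonneg l,
      mul_le_mul_of_nonneg_left exchange (sq_nonneg l),
      mul_le_mul_of_nonneg_left (mul_le_mul_of_nonneg_left tilt hC) (sq_nonneg l)]
  rw [hexp]
  nlinarith [mul_le_mul_of_nonneg_left this (exp_pos (l * c)).le]

theorem expEntropy_const_mul_le_of_le_sub (hz : BddMeasurable z) {v : α → ℝ} (hv : BddMeasurable v)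
    {c C l : ℝ} (hvz : ∀ y, v y ≤ z y - c) (hzC : ∀ y, 2 * (z y - c) ≤ C) (hC : 0 ≤ C)
    (hv2 : ∫ y, v y ^ 2 ∂ν ≤ C * ∫ y, v y ∂ν) (hl : 0 ≤ l) (hlC : l * C ≤ 2) :
    expEntropy ν (fun y => l * z y) ≤ l ^ 2 * (C * ∫ y, exp (l * z y) * (z y - c) ∂ν) := by
  have hez := (hz.const_mul l).exp
  have hezz := hez.mul (hz.sub (.const c))
  have hvv := hv.sq.sub (hv.const_mul C)
  calc expEntropy ν (fun y => l * z y)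
      ≤ ∫ y, (exp (l * z y) * (l * z y - l * c) - exp (l * z y) + exp (l * c)) ∂ν :=
        expEntropy_le_integral (hz.const_mul l) (l * c)
    _ ≤ ∫ y, l ^ 2 * (C * (exp (l * z y) * (z y - c)) + exp (l * c) * (v y ^ 2 - C * v y)) ∂ν :=
        integral_mono ((((hez.mul ((hz.const_mul l).sub (.const _))).sub hez).add
            (.const _)).integrable ν)
          ((((hezz.const_mul C).add (hvv.const_mul _)).const_mul _).integrable ν)
          fun y => exp_mul_sub_exp_add_exp_le hl hlC (hvz y) (hzC y) hC
    _ = l ^ 2 * (C * ∫ y, exp (l * z y) * (z y - c) ∂ν +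
          exp (l * c) * (∫ y, v y ^ 2 ∂ν - C * ∫ y, v y ∂ν)) := by
        rw [integral_const_mul, integral_add ((hezz.const_mul C).integrable ν)
          ((hvv.const_mul _).integrable ν), integral_const_mul, integral_const_mul,
          integral_sub (hv.sq.integrable ν) ((hv.const_mul C).integrable ν), integral_const_mul]
    _ ≤ l ^ 2 * (C * ∫ y, exp (l * z y) * (z y - c) ∂ν) := by
        refine mul_le_mul_of_nonneg_left (add_le_of_nonpos_right ?_) (sq_nonneg l)
        exact mul_nonpos_of_nonneg_of_nonpos (exp_pos _).le (sub_nonpos.2 hv2)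

end ExpEntropy

section Tensorization

variable {ι : Type*} [DecidableEq ι] {𝒳 : ι → Type*}

theorem eq_of_forall_update_eq [Finite ι] {β : Type*} {g : (∀ i, 𝒳 i) → β}
    (h : ∀ i x y, g (Function.update x i y) = g x) (x x' : ∀ i, 𝒳 i) : g x = g x' := by
  cases nonempty_fintype ι
  have replace_on (A : Finset ι) : g (A.piecewise x x') = g x' := by
    induction A using Finset.induction with
    | empty => simp
    | insert a A _ ih => rw [Finset.piecewise_insert, h, ih]
  simpa using replace_on Finset.univ

variable [∀ i, MeasurableSpace (𝒳 i)] {P : ∀ i, Measure (𝒳 i)} {g Z : (∀ i, 𝒳 i) → ℝ}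

theorem BddMeasurable.comp_update_prod (hg : BddMeasurable g) (i : ι) :
    BddMeasurable fun p : (∀ i, 𝒳 i) × 𝒳 i => g (Function.update p.1 i p.2) :=
  hg.comp measurable_update'

theorem BddMeasurable.comp_update (hg : BddMeasurable g) (i : ι) (x : ∀ i, 𝒳 i) :
    BddMeasurable fun y => g (Function.update x i y) :=
  hg.comp (measurable_update x)

/-- The logarithm of the conditional expectation of `e^g` given all coordinates except the `i`-th,
under the product measure. -/
def condLogExp (P : ∀ i, Measure (𝒳 i)) (i : ι) (g : (∀ i, 𝒳 i) → ℝ) (x : ∀ i, 𝒳 i) : ℝ :=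
  log (∫ y, exp (g (Function.update x i y)) ∂P i)

theorem condLogExp_update_self (i : ι) (x : ∀ i, 𝒳 i) (y : 𝒳 i) :
    condLogExp P i g (Function.update x i y) = condLogExp P i g x := by
  simp only [condLogExp, Function.update_idem]

theorem condLogExp_update_of_ne {i j : ι} (hij : j ≠ i)
    (hg : ∀ x y, g (Function.update x j y) = g x) (x : ∀ i, 𝒳 i) (y : 𝒳 j) :
    condLogExp P i g (Function.update x j y) = condLogExp P i g x := by
  simp only [condLogExp, Function.update_comm hij, hg]

variable [∀ i, IsProbabilityMeasure (P i)]

theorem BddMeasurable.condLogExp (hg : BddMeasurable g) (i : ι) :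
    BddMeasurable (condLogExp P i g) := by
  obtain ⟨C, hC⟩ := hg.exists_abs_le
  refine ((hg.comp_update_prod i).exp.integral_prod_right (P i)).log (exp_pos (-C)) fun x => ?_
  simpa using integral_mono (μ := P i) (integrable_const (Real.exp (-C)))
    ((hg.comp_update i x).exp.integrable _)
    fun y => exp_le_exp.2 (abs_le.1 (hC (Function.update x i y))).1

theorem exp_condLogExp (hg : BddMeasurable g) (i : ι) (x : ∀ i, 𝒳 i) :
    exp (condLogExp P i g x) = ∫ y, exp (g (Function.update x i y)) ∂P i :=
  exp_log (integral_exp_pos ((hg.comp_update i x).exp.integrable _))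

theorem BddMeasurable.expEntropy_update (hZ : BddMeasurable Z) (i : ι) :
    BddMeasurable fun x => expEntropy (P i) fun y => Z (Function.update x i y) :=
  ((hZ.exp.mul hZ).comp_update_prod i |>.integral_prod_right (P i)).sub
    ((hZ.exp.comp_update_prod i |>.integral_prod_right (P i)).mul (hZ.condLogExp i))

variable [Fintype ι]

theorem measurePreserving_update (i : ι) :
    MeasurePreserving (fun p : (∀ i, 𝒳 i) × 𝒳 i => Function.update p.1 i p.2)
      ((Measure.pi P).prod (P i)) (Measure.pi P) := by
  refine ⟨measurable_update', (Measure.pi_eq fun B hB => ?_).symm⟩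
  have preimage : (fun p : (∀ i, 𝒳 i) × 𝒳 i => Function.update p.1 i p.2) ⁻¹' univ.pi B =
      univ.pi (Function.update B i univ) ×ˢ B i := by
    ext p
    simp only [mem_preimage, mem_univ_pi, mem_prod]
    refine ⟨fun h => ⟨fun j => ?_, by simpa using h i⟩, fun ⟨h, hi⟩ j => ?_⟩
    all_goals rcases eq_or_ne j i with rfl | hj
    · simp
    · simpa [hj] using h j
    · simpa using hi
    · simpa [hj] using h j
  rw [Measure.map_apply measurable_update' (MeasurableSet.univ_pi hB), preimage,
    Measure.prod_prod, Measure.pi_pi, ← Finset.mul_prod_erase _ _ (Finset.mem_univ i),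
    ← Finset.mul_prod_erase _ (fun j => P j (B j)) (Finset.mem_univ i), Function.update_self,
    measure_univ, one_mul, mul_comm]
  congr 1
  exact Finset.prod_congr rfl fun j hj => by rw [Function.update_of_ne (Finset.ne_of_mem_erase hj)]

theorem integral_integral_update (hg : BddMeasurable g) (i : ι) :
    ∫ x, ∫ y, g (Function.update x i y) ∂P i ∂Measure.pi P = ∫ x, g x ∂Measure.pi P := by
  rw [← integral_prod _ ((hg.comp_update_prod i).integrable _),
    ← (measurePreserving_update (P := P) i).map_eq,
    integral_map measurable_update'.aemeasurable hg.measurable.aestronglyMeasurable,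
    (measurePreserving_update i).map_eq]

theorem integral_exp_mul_sub_condLogExp_le (hZ : BddMeasurable Z) (hg : BddMeasurable g) (i : ι) :
    ∫ x, exp (Z x) * (g x - condLogExp P i g x) ∂Measure.pi P ≤
      ∫ x, expEntropy (P i) (fun y => Z (Function.update x i y)) ∂Measure.pi P := by
  have hF := hZ.exp.mul (hg.sub (hg.condLogExp (P := P) i))
  rw [← integral_integral_update hF i]
  refine integral_mono ((hF.comp_update_prod i |>.integral_prod_right (P i)).integrable _)
    ((hZ.expEntropy_update i).integrable _) fun x => ?_
  simp only [condLogExp_update_self]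
  exact integral_exp_mul_sub_le_expEntropy (hZ.comp_update i x) (hg.comp_update i x)

/-- Integrating out the coordinates in `A` one at a time telescopes the entropy. -/
theorem exists_partial_condLogExp (hZ : BddMeasurable Z) (A : Finset ι) :
    ∃ g : (∀ i, 𝒳 i) → ℝ, BddMeasurable g ∧ (∀ i ∈ A, ∀ x y, g (Function.update x i y) = g x) ∧
      ∫ x, exp (g x) ∂Measure.pi P = ∫ x, exp (Z x) ∂Measure.pi P ∧
      ∫ x, exp (Z x) * (Z x - g x) ∂Measure.pi P ≤
        ∑ i ∈ A, ∫ x, expEntropy (P i) (fun y => Z (Function.update x i y)) ∂Measure.pi P := by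
  induction A using Finset.induction with
  | empty => exact ⟨Z, hZ, by simp, rfl, by simp⟩
  | insert i A hi ih =>
    obtain ⟨g, hg, g_update, g_integral, g_le⟩ := ih
    have hg' := hg.condLogExp (P := P) i
    refine ⟨condLogExp P i g, hg', fun j hj x y => ?_, ?_, ?_⟩
    · rcases Finset.mem_insert.1 hj with rfl | hj
      · exact condLogExp_update_self j x y
      · exact condLogExp_update_of_ne (ne_of_mem_of_not_mem hj hi) (g_update j hj) x y
    · simp only [exp_condLogExp hg]
      rw [integral_integral_update hg.exp, g_integral]
    · calc ∫ x, exp (Z x) * (Z x - condLogExp P i g x) ∂Measure.pi P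
          = ∫ x, exp (Z x) * (g x - condLogExp P i g x) ∂Measure.pi P +
              ∫ x, exp (Z x) * (Z x - g x) ∂Measure.pi P := by
            rw [← integral_add ((hZ.exp.mul (hg.sub hg')).integrable _)
              ((hZ.exp.mul (hZ.sub hg)).integrable _)]
            congr with x
            ring
        _ ≤ _ := by
            rw [Finset.sum_insert hi]
            exact add_le_add (integral_exp_mul_sub_condLogExp_le hZ hg i) g_le

theorem expEntropy_pi_le_sum (hZ : BddMeasurable Z) :
    expEntropy (Measure.pi P) Z ≤
      ∑ i, ∫ x, expEntropy (P i) (fun y => Z (Function.update x i y)) ∂Measure.pi P := by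
  obtain ⟨g, _, g_update, g_integral, g_le⟩ := exists_partial_condLogExp (P := P) hZ Finset.univ
  have g_eq (x : ∀ i, 𝒳 i) : g x = log (∫ x, exp (Z x) ∂Measure.pi P) := by
    have g_const (x') : g x' = g x :=
      eq_of_forall_update_eq (fun i => g_update i (Finset.mem_univ i)) x' x
    rw [← g_integral]
    simp [g_const]
  refine le_trans (le_of_eq ?_) g_le
  simp only [g_eq, mul_sub]
  rw [integral_sub ((hZ.exp.mul hZ).integrable _) ((hZ.exp.mul (.const _)).integrable _),
    integral_mul_const, expEntropy]

end Tensorization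

section Herbst

open ProbabilityTheory

variable {α : Type*} [MeasurableSpace α] {ν : Measure α} [IsProbabilityMeasure ν] {Z : α → ℝ}

theorem BddMeasurable.mem_interior_integrableExpSet (hZ : BddMeasurable Z) (l : ℝ) :
    l ∈ interior (integrableExpSet Z ν) := by
  have : integrableExpSet Z ν = univ :=
    eq_univ_of_forall fun t => (hZ.const_mul t).exp.integrable ν
  simp [this]

theorem BddMeasurable.hasDerivAt_cgf (hZ : BddMeasurable Z) (l : ℝ) :
    HasDerivAt (cgf Z ν) (deriv (cgf Z ν) l) l :=
  (analyticAt_cgf (hZ.mem_interior_integrableExpSet l)).differentiableAt.hasDerivAt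

theorem integral_exp_mul_mul_self (hZ : BddMeasurable Z) (l : ℝ) :
    ∫ x, exp (l * Z x) * Z x ∂ν = mgf Z ν l * deriv (cgf Z ν) l := by
  have : 0 < mgf Z ν l := integral_exp_pos ((hZ.const_mul l).exp.integrable ν)
  rw [deriv_cgf (hZ.mem_interior_integrableExpSet l), mul_div_cancel₀ _ this.ne']
  simp only [mul_comm]

theorem expEntropy_const_mul_eq (hZ : BddMeasurable Z) (l : ℝ) :
    expEntropy ν (fun x => l * Z x) = mgf Z ν l * (l * deriv (cgf Z ν) l - cgf Z ν l) := by
  have : ∫ x, exp (l * Z x) * (l * Z x) ∂ν = l * ∫ x, exp (l * Z x) * Z x ∂ν := by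
    rw [← integral_const_mul]
    simp only [mul_left_comm]
  rw [expEntropy, this, integral_exp_mul_mul_self hZ, cgf, mgf]
  ring

theorem tendsto_cgf_div_nhdsGT_zero (hZ : BddMeasurable Z) :
    Tendsto (fun t => cgf Z ν t / t) (nhdsWithin 0 (Ioi 0)) (nhds (∫ x, Z x ∂ν)) := by
  have h := (hZ.hasDerivAt_cgf (ν := ν) 0).hasDerivWithinAt (s := Ioi 0)
  rw [deriv_cgf_zero (hZ.mem_interior_integrableExpSet 0), probReal_univ, div_one,
    hasDerivWithinAt_iff_tendsto_slope' (by simp)] at h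
  exact h.congr fun t => by simp [slope_def_field, cgf_zero]

/-- Herbst's argument: the entropy bound says that `t ↦ cgf t / t - C * cgf t` decreases, and this
function tends to the mean at `0`. -/
theorem one_sub_mul_cgf_le_of_expEntropy_le (hZ : BddMeasurable Z) {C l : ℝ} (hl : 0 < l)
    (hent : ∀ t, 0 < t → t ≤ l →
      expEntropy ν (fun x => t * Z x) ≤ t ^ 2 * (C * ∫ x, exp (t * Z x) * Z x ∂ν)) :
    (1 - C * l) * cgf Z ν l ≤ l * ∫ x, Z x ∂ν := by
  set F : ℝ → ℝ := fun t => cgf Z ν t / t - C * cgf Z ν t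
  have hF (t : ℝ) (ht : 0 < t) : HasDerivAt F
      ((deriv (cgf Z ν) t * t - cgf Z ν t * 1) / t ^ 2 - C * deriv (cgf Z ν) t) t :=
    ((hZ.hasDerivAt_cgf t).div (hasDerivAt_id t) ht.ne').sub ((hZ.hasDerivAt_cgf t).const_mul C)
  have F_anti : AntitoneOn F (Ioc 0 l) := by
    refine antitoneOn_of_deriv_nonpos (convex_Ioc 0 l)
      (fun t ht => (hF t ht.1).continuousAt.continuousWithinAt)
      (fun t ht => (hF t (interior_subset ht).1).differentiableAt.differentiableWithinAt)
      fun t ht => ?_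
    obtain ⟨ht0, htl⟩ := interior_subset ht
    have mgf_pos : 0 < mgf Z ν t := integral_exp_pos ((hZ.const_mul t).exp.integrable ν)
    have := hent t ht0 htl
    rw [expEntropy_const_mul_eq hZ, integral_exp_mul_mul_self hZ, mul_left_comm C,
      mul_left_comm (t ^ 2)] at this
    rw [(hF t ht0).deriv, sub_nonpos, div_le_iff₀ (by positivity)]
    linarith [le_of_mul_le_mul_left this mgf_pos]
  have F_tendsto : Tendsto F (nhdsWithin 0 (Ioi 0)) (nhds (∫ x, Z x ∂ν)) := by
    have cgf_tendsto := (hZ.hasDerivAt_cgf (ν := ν) 0).continuousAt.tendsto.mono_left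
      (nhdsWithin_le_nhds (s := Ioi 0))
    simpa using (tendsto_cgf_div_nhdsGT_zero hZ).sub (cgf_tendsto.const_mul C)
  have F_le : F l ≤ ∫ x, Z x ∂ν := by
    refine ge_of_tendsto F_tendsto ?_
    filter_upwards [Ioc_mem_nhdsGT hl] with t ht
    exact F_anti ht ⟨hl, le_rfl⟩ ht.2
  calc (1 - C * l) * cgf Z ν l = l * F l := by simp only [F]; field_simp
    _ ≤ l * ∫ x, Z x ∂ν := mul_le_mul_of_nonneg_left F_le hl.le

end Herbst

section EmpSup

variable {ι : Type*} {𝒳 : ι → Type*} {κ : Type*} {f : κ → ∀ i, 𝒳 i → ℝ}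

/-- The supremum over the class `f` of the sums of `f a i (x i)` over the coordinates `i ∈ A`. The
choice `A = univ` is the supremum of the empirical process, `A = univ.erase i` its leave-one-out
version. -/
def empSup (A : Finset ι) (f : κ → ∀ i, 𝒳 i → ℝ) (x : ∀ i, 𝒳 i) : ℝ :=
  ⨆ a, ∑ i ∈ A, f a i (x i)

theorem le_empSup [Finite κ] (A : Finset ι) (a : κ) (x : ∀ i, 𝒳 i) :
    ∑ i ∈ A, f a i (x i) ≤ empSup A f x :=
  le_ciSup (finite_range fun a => ∑ i ∈ A, f a i (x i)).bddAbove a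

theorem exists_sum_eq_empSup [Finite κ] [Nonempty κ] (A : Finset ι) (x : ∀ i, 𝒳 i) :
    ∃ a, ∑ i ∈ A, f a i (x i) = empSup A f x :=
  exists_eq_ciSup_of_finite

theorem bddMeasurable_empSup [Finite κ] [∀ i, MeasurableSpace (𝒳 i)]
    (hf : ∀ a i, BddMeasurable (f a i)) (A : Finset ι) : BddMeasurable (empSup A f) := by
  have hsum (a : κ) : BddMeasurable fun x : ∀ i, 𝒳 i => ∑ i ∈ A, f a i (x i) :=
    .sum A fun i => (hf a i).comp (measurable_pi_apply i)
  choose C hC using fun a => (hsum a).exists_abs_le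
  obtain ⟨D, hD⟩ := (finite_range C).bddAbove
  exact .iSup (fun a => (hsum a).measurable) fun a x => (hC a x).trans (hD (mem_range_self a))

section LeaveOneOut

variable [Fintype ι] [DecidableEq ι]

theorem empSup_erase_update (i : ι) (x : ∀ i, 𝒳 i) (y : 𝒳 i) :
    empSup (Finset.univ.erase i) f (Function.update x i y) =
      empSup (Finset.univ.erase i) f x := by
  refine iSup_congr fun a => Finset.sum_congr rfl fun j hj => ?_
  rw [Function.update_of_ne (Finset.ne_of_mem_erase hj)]

variable [Finite κ] [Nonempty κ]

theorem exists_empSup_sub_empSup_erase_le (x : ∀ i, 𝒳 i) :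
    ∃ a, ∑ i, f a i (x i) = empSup Finset.univ f x ∧
      ∀ i, empSup Finset.univ f x - empSup (Finset.univ.erase i) f x ≤ f a i (x i) := by
  obtain ⟨a, ha⟩ := exists_sum_eq_empSup (f := f) Finset.univ x
  refine ⟨a, ha, fun i => ?_⟩
  rw [← ha, ← Finset.add_sum_erase _ _ (Finset.mem_univ i)]
  linarith [le_empSup (f := f) (Finset.univ.erase i) a x]

theorem exists_le_empSup_update_sub_empSup_erase (i : ι) (x : ∀ i, 𝒳 i) :
    ∃ a, ∀ y, f a i y ≤ empSup Finset.univ f (Function.update x i y) -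
      empSup (Finset.univ.erase i) f x := by
  obtain ⟨a, ha⟩ := exists_sum_eq_empSup (f := f) (Finset.univ.erase i) x
  refine ⟨a, fun y => ?_⟩
  have := le_empSup (f := f) Finset.univ a (Function.update x i y)
  have sum_erase : ∑ j ∈ Finset.univ.erase i, f a j (Function.update x i y j) =
      ∑ j ∈ Finset.univ.erase i, f a j (x j) :=
    Finset.sum_congr rfl fun j hj => by rw [Function.update_of_ne (Finset.ne_of_mem_erase hj)]
  rw [← Finset.add_sum_erase _ _ (Finset.mem_univ i), sum_erase, ha, Function.update_self] at this
  linarith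

theorem sum_empSup_sub_empSup_erase_le (x : ∀ i, 𝒳 i) :
    ∑ i, (empSup Finset.univ f x - empSup (Finset.univ.erase i) f x) ≤
      empSup Finset.univ f x := by
  obtain ⟨a, ha, hle⟩ := exists_empSup_sub_empSup_erase_le (f := f) x
  exact (Finset.sum_le_sum fun i _ => hle i).trans_eq ha

variable [∀ i, MeasurableSpace (𝒳 i)] {P : ∀ i, Measure (𝒳 i)} [∀ i, IsProbabilityMeasure (P i)]

theorem integral_expEntropy_empSup_update_le (hf : ∀ a i, BddMeasurable (f a i)) {C l : ℝ}
    (hfC : ∀ a i y, 2 * f a i y ≤ C) (hC : 0 ≤ C)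
    (hf2 : ∀ a i, ∫ y, f a i y ^ 2 ∂P i ≤ C * ∫ y, f a i y ∂P i) (hl : 0 ≤ l) (hlC : l * C ≤ 2)
    (i : ι) :
    ∫ x, expEntropy (P i) (fun y => l * empSup Finset.univ f (Function.update x i y))
        ∂Measure.pi P ≤
      l ^ 2 * (C * ∫ x, exp (l * empSup Finset.univ f x) *
        (empSup Finset.univ f x - empSup (Finset.univ.erase i) f x) ∂Measure.pi P) := by
  have hZ := bddMeasurable_empSup hf Finset.univ
  have hF := (hZ.const_mul l).exp.mul (hZ.sub (bddMeasurable_empSup hf (Finset.univ.erase i)))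
  have conditional (x : ∀ i, 𝒳 i) :
      expEntropy (P i) (fun y => l * empSup Finset.univ f (Function.update x i y)) ≤
        l ^ 2 * (C * ∫ y, exp (l * empSup Finset.univ f (Function.update x i y)) *
          (empSup Finset.univ f (Function.update x i y) -
            empSup (Finset.univ.erase i) f (Function.update x i y)) ∂P i) := by
    obtain ⟨a, ha⟩ := exists_le_empSup_update_sub_empSup_erase (f := f) i x
    simp only [empSup_erase_update]
    refine expEntropy_const_mul_le_of_le_sub (hZ.comp_update i x) (hf a i) ha (fun y => ?_) hC
      (hf2 a i) hl hlC
    obtain ⟨b, -, hb⟩ := exists_empSup_sub_empSup_erase_le (f := f) (Function.update x i y)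
    have := hb i
    rw [empSup_erase_update] at this
    linarith [hfC b i (Function.update x i y i)]
  have inner := (hF.comp_update_prod i).integral_prod_right (P i)
  rw [← integral_integral_update hF i, ← integral_const_mul, ← integral_const_mul]
  exact integral_mono (((hZ.const_mul l).expEntropy_update i).integrable _)
    (((inner.const_mul C).const_mul (l ^ 2)).integrable _) conditional

end LeaveOneOut

variable [Fintype ι] [Finite κ] [Nonempty κ] [∀ i, MeasurableSpace (𝒳 i)]
  {P : ∀ i, Measure (𝒳 i)} [∀ i, IsProbabilityMeasure (P i)]

theorem expEntropy_const_mul_empSup_le (hf : ∀ a i, BddMeasurable (f a i)) {C l : ℝ}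
    (hfC : ∀ a i y, 2 * f a i y ≤ C) (hC : 0 ≤ C)
    (hf2 : ∀ a i, ∫ y, f a i y ^ 2 ∂P i ≤ C * ∫ y, f a i y ∂P i) (hl : 0 ≤ l)
    (hlC : l * C ≤ 2) :
    expEntropy (Measure.pi P) (fun x => l * empSup Finset.univ f x) ≤
      l ^ 2 * (C * ∫ x, exp (l * empSup Finset.univ f x) * empSup Finset.univ f x
        ∂Measure.pi P) := by
  have hZ := bddMeasurable_empSup hf Finset.univ
  have hF (i : ι) := (hZ.const_mul l).exp.mul
    (hZ.sub (bddMeasurable_empSup hf (Finset.univ.erase i)))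
  calc expEntropy (Measure.pi P) (fun x => l * empSup Finset.univ f x)
      ≤ ∑ i, l ^ 2 * (C * ∫ x, exp (l * empSup Finset.univ f x) *
          (empSup Finset.univ f x - empSup (Finset.univ.erase i) f x) ∂Measure.pi P) :=
        (expEntropy_pi_le_sum (hZ.const_mul l)).trans <| Finset.sum_le_sum fun i _ =>
          integral_expEntropy_empSup_update_le hf hfC hC hf2 hl hlC i
    _ = l ^ 2 * (C * ∫ x, exp (l * empSup Finset.univ f x) *
          ∑ i, (empSup Finset.univ f x - empSup (Finset.univ.erase i) f x) ∂Measure.pi P) := by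
        simp only [Finset.mul_sum]
        rw [integral_finsetSum _ fun i _ => (hF i).integrable _]
        simp only [Finset.mul_sum]
    _ ≤ _ := by
        refine mul_le_mul_of_nonneg_left (mul_le_mul_of_nonneg_left ?_ hC) (sq_nonneg l)
        refine integral_mono (((hZ.const_mul l).exp.mul (.sum _ fun i =>
          hZ.sub (bddMeasurable_empSup hf _))).integrable _)
          (((hZ.const_mul l).exp.mul hZ).integrable _) fun x => ?_
        exact mul_le_mul_of_nonneg_left (sum_empSup_sub_empSup_erase_le x) (exp_pos _).le

open ProbabilityTheory in
theorem one_sub_mul_cgf_empSup_le (hf : ∀ a i, BddMeasurable (f a i)) {C l : ℝ}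
    (hfC : ∀ a i y, 2 * f a i y ≤ C) (hC : 0 ≤ C)
    (hf2 : ∀ a i, ∫ y, f a i y ^ 2 ∂P i ≤ C * ∫ y, f a i y ∂P i) (hl : 0 < l)
    (hCl : C * l ≤ 2) :
    (1 - C * l) * cgf (empSup Finset.univ f) (Measure.pi P) l ≤
      l * ∫ x, empSup Finset.univ f x ∂Measure.pi P :=
  one_sub_mul_cgf_le_of_expEntropy_le (bddMeasurable_empSup hf Finset.univ) hl fun t ht htl =>
    expEntropy_const_mul_empSup_le hf hfC hC hf2 ht.le (by nlinarith)

end EmpSup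

section Concentration

variable {ι : Type*} {𝒳 : ι → Type*} [∀ i, MeasurableSpace (𝒳 i)]
  {P : ∀ i, Measure (𝒳 i)} {κ : Type*} {f : κ → ∀ i, 𝒳 i → ℝ}

/-- The class `f` shifted by `c` times its second moments. For a centred class the shift makes the
mean proportional to the variance, the condition under which `empSup` is self-bounding. -/
def varShift (P : ∀ i, Measure (𝒳 i)) (c : ℝ) (f : κ → ∀ i, 𝒳 i → ℝ) (a : κ) (i : ι)
    (y : 𝒳 i) : ℝ :=
  f a i y + c * ∫ y', f a i y' ^ 2 ∂P i

theorem empSup_le_empSup_varShift [Fintype ι] [Finite κ] [Nonempty κ] {c : ℝ} (hc : 0 ≤ c)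
    (x : ∀ i, 𝒳 i) :
    empSup Finset.univ f x ≤ empSup Finset.univ (varShift P c f) x := by
  refine ciSup_le fun a => le_trans (Finset.sum_le_sum fun i _ => ?_) (le_empSup _ a x)
  exact le_add_of_nonneg_right (mul_nonneg hc (integral_nonneg fun y => sq_nonneg _))

theorem empSup_varShift_le [Fintype ι] [Finite κ] [Nonempty κ] {c σ : ℝ} (hc : 0 ≤ c)
    (hσ : ∀ a, ∑ i, ∫ y, f a i y ^ 2 ∂P i ≤ σ) (x : ∀ i, 𝒳 i) :
    empSup Finset.univ (varShift P c f) x ≤ empSup Finset.univ f x + c * σ := by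
  refine ciSup_le fun a => ?_
  simp only [varShift, Finset.sum_add_distrib, ← Finset.mul_sum]
  exact add_le_add (le_empSup _ a x) (mul_le_mul_of_nonneg_left (hσ a) hc)

variable [∀ i, IsProbabilityMeasure (P i)]

theorem integral_varShift {a : κ} {i : ι} (hf : BddMeasurable (f a i))
    (hmean : ∫ y, f a i y ∂P i = 0) (c : ℝ) :
    ∫ y, varShift P c f a i y ∂P i = c * ∫ y, f a i y ^ 2 ∂P i := by
  simp only [varShift]
  rw [integral_add (hf.integrable _) (integrable_const _), hmean, zero_add, integral_const,
    probReal_univ, one_smul]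

theorem integral_varShift_sq {a : κ} {i : ι} (hf : BddMeasurable (f a i))
    (hmean : ∫ y, f a i y ∂P i = 0) (c : ℝ) :
    ∫ y, varShift P c f a i y ^ 2 ∂P i =
      ∫ y, f a i y ^ 2 ∂P i + (c * ∫ y, f a i y ^ 2 ∂P i) ^ 2 := by
  set d := c * ∫ y, f a i y ^ 2 ∂P i with hd
  have expand (y : 𝒳 i) : varShift P c f a i y ^ 2 = f a i y ^ 2 + 2 * d * f a i y + d ^ 2 := by
    rw [varShift, ← hd]
    ring
  simp only [expand]
  rw [integral_add ((hf.sq.add (hf.const_mul _)).integrable _) (integrable_const _),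
    integral_add (hf.sq.integrable _) ((hf.const_mul _).integrable _), integral_const_mul, hmean,
    integral_const, probReal_univ, one_smul, mul_zero, add_zero]

theorem integral_sq_le_sq_of_abs_le {a : κ} {i : ι} (hf : BddMeasurable (f a i)) {b : ℝ}
    (hb : ∀ y, |f a i y| ≤ b) : ∫ y, f a i y ^ 2 ∂P i ≤ b ^ 2 := by
  simpa using integral_mono (hf.sq.integrable (P i)) (integrable_const (b ^ 2))
    fun y => sq_le_sq' (abs_le.1 (hb y)).1 (abs_le.1 (hb y)).2

theorem integral_varShift_sq_le {a : κ} {i : ι} (hf : BddMeasurable (f a i)) {b c C : ℝ}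
    (hb : ∀ y, |f a i y| ≤ b) (hmean : ∫ y, f a i y ∂P i = 0) (hC : 1 + 3 * (c * b) ^ 2 ≤ C * c) :
    ∫ y, varShift P c f a i y ^ 2 ∂P i ≤ C * ∫ y, varShift P c f a i y ∂P i := by
  rw [integral_varShift hf hmean, integral_varShift_sq hf hmean]
  have hv0 : 0 ≤ ∫ y, f a i y ^ 2 ∂P i := integral_nonneg fun y => sq_nonneg _
  have hvb := integral_sq_le_sq_of_abs_le (P := P) hf hb
  nlinarith [mul_le_mul_of_nonneg_left hvb (mul_nonneg (sq_nonneg c) hv0),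
    mul_le_mul_of_nonneg_right hC hv0, mul_nonneg (sq_nonneg (c * b)) hv0]

theorem two_mul_varShift_le {a : κ} {i : ι} (hf : BddMeasurable (f a i)) {b c C : ℝ}
    (hb : ∀ y, |f a i y| ≤ b) (hc : 0 < c) (hC : 1 + 3 * (c * b) ^ 2 ≤ C * c) (y : 𝒳 i) :
    2 * varShift P c f a i y ≤ C := by
  have hvb := mul_le_mul_of_nonneg_left (integral_sq_le_sq_of_abs_le (P := P) hf hb) hc.le
  have : 2 * (b + c * b ^ 2) * c ≤ C * c := by nlinarith [sq_nonneg (1 - c * b)]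
  calc 2 * varShift P c f a i y ≤ 2 * (b + c * b ^ 2) := by
        rw [varShift]
        linarith [(abs_le.1 (hb y)).2]
    _ ≤ C := le_of_mul_le_mul_right this hc

variable [Fintype ι]

open ProbabilityTheory in
/-- A Bernstein-type form of Talagrand's inequality. -/
theorem measureReal_le_empSup_le_exp_neg [Finite κ] [Nonempty κ]
    (hf : ∀ a i, BddMeasurable (f a i))
    {b σ c C l u ξ : ℝ} (hb : ∀ a i y, |f a i y| ≤ b) (hmean : ∀ a i, ∫ y, f a i y ∂P i = 0)
    (hσ : ∀ a, ∑ i, ∫ y, f a i y ^ 2 ∂P i ≤ σ) (hc : 0 < c) (hC : 1 + 3 * (c * b) ^ 2 ≤ C * c)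
    (hl : 0 < l) (hCl : C * l < 1)
    (hu : (∫ x, empSup Finset.univ f x ∂Measure.pi P + c * σ) / (1 - C * l) + ξ / l ≤ u) :
    (Measure.pi P).real {x | u ≤ empSup Finset.univ f x} ≤ exp (-ξ) := by
  set g := varShift P c f
  have hg (a : κ) (i : ι) : BddMeasurable (g a i) := (hf a i).add (.const _)
  have hZ := bddMeasurable_empSup hf Finset.univ
  have hW := bddMeasurable_empSup hg Finset.univ
  have hC0 : 0 ≤ C := nonneg_of_mul_nonneg_left ((by positivity : (0 : ℝ) ≤ _).trans hC) hc
  have cgf_le := one_sub_mul_cgf_empSup_le (P := P) hg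
    (fun a i => two_mul_varShift_le (hf a i) (hb a i) hc hC) hC0
    (fun a i => integral_varShift_sq_le (hf a i) (hb a i) (hmean a i) hC) hl (by linarith)
  have mean_le : ∫ x, empSup Finset.univ g x ∂Measure.pi P ≤
      ∫ x, empSup Finset.univ f x ∂Measure.pi P + c * σ := by
    simpa [integral_add (hZ.integrable _) (integrable_const _)] using
      integral_mono (μ := Measure.pi P) (hW.integrable _) ((hZ.add (.const _)).integrable _)
        (empSup_varShift_le hc.le hσ)
  have exponent_le : -l * u + cgf (empSup Finset.univ g) (Measure.pi P) l ≤ -ξ := by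
    have h1 : cgf (empSup Finset.univ g) (Measure.pi P) l ≤
        l * ((∫ x, empSup Finset.univ f x ∂Measure.pi P + c * σ) / (1 - C * l)) := by
      rw [← mul_div_assoc, le_div_iff₀ (by linarith), mul_comm]
      exact cgf_le.trans (mul_le_mul_of_nonneg_left mean_le hl.le)
    have h2 := mul_le_mul_of_nonneg_left hu hl.le
    rw [mul_add, mul_div_cancel₀ _ hl.ne'] at h2
    linarith
  calc (Measure.pi P).real {x | u ≤ empSup Finset.univ f x}
      ≤ (Measure.pi P).real {x | u ≤ empSup Finset.univ g x} :=
        measureReal_mono fun x hx => le_trans hx (empSup_le_empSup_varShift hc.le x)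
    _ ≤ exp (-l * u + cgf (empSup Finset.univ g) (Measure.pi P) l) :=
        measure_ge_le_exp_cgf u hl.le ((hW.const_mul l).exp.integrable _)
    _ ≤ exp (-ξ) := exp_le_exp.2 exponent_le

theorem measure_iUnion_le_of_forall_finset {α : Type*} [MeasurableSpace α] {ν : Measure α}
    [Countable κ] {E : κ → Set α} {p : ℝ≥0∞} (h : ∀ T : Finset κ, ν (⋃ a ∈ T, E a) ≤ p) :
    ν (⋃ a, E a) ≤ p := by
  rw [iUnion_eq_iUnion_finset, Directed.measure_iUnion]
  · exact iSup_le h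
  · exact Monotone.directed_le fun T T' hT => biUnion_subset_biUnion_left hT

theorem measure_iUnion_le_sum_le_exp_neg [Countable κ]
    (hf : ∀ a i, BddMeasurable (f a i)) {b σ B c C l u ξ : ℝ} (hb : ∀ a i y, |f a i y| ≤ b)
    (hmean : ∀ a i, ∫ y, f a i y ∂P i = 0) (hσ : ∀ a, ∑ i, ∫ y, f a i y ^ 2 ∂P i ≤ σ)
    (hB : ∫ x, ⨆ a, |∑ i, f a i (x i)| ∂Measure.pi P ≤ B)
    (hc : 0 < c) (hC : 1 + 3 * (c * b) ^ 2 ≤ C * c) (hl : 0 < l) (hCl : C * l < 1)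
    (hu : (B + c * σ) / (1 - C * l) + ξ / l ≤ u) :
    Measure.pi P (⋃ a, {x | u ≤ ∑ i, f a i (x i)}) ≤ ENNReal.ofReal (exp (-ξ)) := by
  have abs_sum_le (a : κ) (x : ∀ i, 𝒳 i) : |∑ i, f a i (x i)| ≤ ∑ _ : ι, b :=
    (Finset.abs_sum_le_sum_abs _ _).trans (Finset.sum_le_sum fun i _ => hb a i (x i))
  refine measure_iUnion_le_of_forall_finset fun T => ?_
  rcases T.eq_empty_or_nonempty with rfl | hT
  · simp
  have : Nonempty T := hT.to_subtype
  set fT : T → ∀ i, 𝒳 i → ℝ := fun a => f a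
  have hfT (a : T) (i : ι) : BddMeasurable (fT a i) := hf a i
  have sup_bdd : BddMeasurable fun x : ∀ i, 𝒳 i => ⨆ a, |∑ i, f a i (x i)| :=
    .iSup (fun a => (BddMeasurable.sum Finset.univ fun i =>
      (hf a i).comp (measurable_pi_apply i)).measurable.abs)
      fun a x => (abs_abs _).trans_le (abs_sum_le a x)
  have mean_le : ∫ x, empSup Finset.univ fT x ∂Measure.pi P ≤ B := by
    refine le_trans (integral_mono ((bddMeasurable_empSup hfT _).integrable _)
      (sup_bdd.integrable _) fun x => ciSup_le fun a => ?_) hB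
    exact (le_abs_self _).trans (le_ciSup (f := fun a => |∑ i, f a i (x i)|)
      ⟨_, forall_mem_range.2 fun a => abs_sum_le a x⟩ (a : κ))
  have tail := measureReal_le_empSup_le_exp_neg (P := P) hfT (fun a => hb a) (fun a => hmean a)
    (fun a => hσ a) hc hC hl hCl (ξ := ξ) (u := u) (le_trans (by gcongr) hu)
  rw [measureReal_def, ← ENNReal.le_ofReal_iff_toReal_le (measure_ne_top _ _) (exp_pos _).le]
    at tail
  refine (measure_mono (iUnion₂_subset fun a ha x hx => ?_)).trans tail
  exact le_trans hx (le_empSup (f := fT) _ ⟨a, ha⟩ x)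

end Concentration

section PsiR

variable {a b p : ℝ}

theorem psiR_eq (ha : 0 ≤ a) (hb : 0 ≤ b) : psiR a b = (√b - √a) / (√b + √a) := by
  unfold psiR
  rcases ha.eq_or_lt with rfl | ha
  · rcases hb.eq_or_lt with rfl | hb
    · simp
    · have := (Real.sqrt_pos.2 hb).ne'
      simp [hb.ne', this]
  · have := (Real.sqrt_pos.2 ha).ne'
    rw [if_neg ha.ne', Real.sqrt_div' _ ha.le]
    field_simp

theorem psiR_mul_add (ha : 0 ≤ a) (hb : 0 ≤ b) : psiR a b * (√b + √a) = √b - √a := by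
  rw [psiR_eq ha hb]
  refine div_mul_cancel_of_imp fun h => ?_
  linarith [Real.sqrt_nonneg a, Real.sqrt_nonneg b]

theorem abs_psiR_le_one (ha : 0 ≤ a) (hb : 0 ≤ b) : |psiR a b| ≤ 1 := by
  have ha' := Real.sqrt_nonneg a
  have hb' := Real.sqrt_nonneg b
  rw [psiR_eq ha hb, abs_div, abs_of_nonneg (add_nonneg hb' ha')]
  exact div_le_one_of_le₀ (abs_sub_le_iff.2 ⟨by linarith, by linarith⟩) (add_nonneg hb' ha')

theorem measurable_psiR : Measurable fun q : ℝ × ℝ => psiR q.1 q.2 := by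
  have hsqrt : Measurable fun q : ℝ × ℝ => √(q.2 / q.1) :=
    (measurable_snd.div measurable_fst).sqrt
  exact .ite (measurableSet_eq_fun measurable_fst measurable_const)
    (.ite (measurableSet_eq_fun measurable_snd measurable_const) measurable_const measurable_const)
    ((hsqrt.sub_const 1).div (hsqrt.add_const 1))

theorem mul_psiR_sq_le (hp : 0 ≤ p) (ha : 0 ≤ a) (hb : 0 ≤ b) :
    p * psiR a b ^ 2 ≤ (√p - √a) ^ 2 + (√p - √b) ^ 2 := by
  set r := psiR a b
  set m := √b + √a
  have hr : r ^ 2 ≤ 1 := (sq_le_one_iff_abs_le_one r).2 (abs_psiR_le_one ha hb)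
  have ha' : √a = (1 - r) * m / 2 := by linarith [psiR_mul_add ha hb]
  have hb' : √b = (1 + r) * m / 2 := by linarith [psiR_mul_add ha hb]
  have gap : (√p - √a) ^ 2 + (√p - √b) ^ 2 - √p ^ 2 * r ^ 2 =
      ((1 - r ^ 2) * (2 * √p - m) ^ 2 + 2 * r ^ 2 * (√p - m) ^ 2) / 2 := by
    rw [ha', hb']
    ring
  have gap_nonneg : 0 ≤ ((1 - r ^ 2) * (2 * √p - m) ^ 2 + 2 * r ^ 2 * (√p - m) ^ 2) / 2 := by
    have := sub_nonneg.2 hr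
    positivity
  rw [Real.sq_sqrt hp] at gap
  linarith

theorem mul_psiR_le (hp : 0 ≤ p) (ha : 0 ≤ a) (hb : 0 ≤ b) :
    p * psiR a b ≤ 2 * (√p - √a) ^ 2 - 3 / 16 * (√p - √b) ^ 2 + (b - a) / 4 := by
  set r := psiR a b
  set m := √b + √a
  have hr : r ≤ 1 := (le_abs_self r).trans (abs_psiR_le_one ha hb)
  have ha' : √a = (1 - r) * m / 2 := by linarith [psiR_mul_add ha hb]
  have hb' : √b = (1 + r) * m / 2 := by linarith [psiR_mul_add ha hb]
  have hA : 0 < 29 / 16 - r := by linarith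
  have gap : (29 / 16 - r) * (2 * (√p - √a) ^ 2 - 3 / 16 * (√p - √b) ^ 2 +
        (√b ^ 2 - √a ^ 2) / 4 - √p ^ 2 * r) =
      ((29 / 16 - r) * √p + (35 * r - 29) / 32 * m) ^ 2 + r ^ 2 * (30 - 29 * r) / 64 * m ^ 2 := by
    rw [ha', hb']
    ring
  have gap_nonneg : 0 ≤ ((29 / 16 - r) * √p + (35 * r - 29) / 32 * m) ^ 2 +
      r ^ 2 * (30 - 29 * r) / 64 * m ^ 2 := by
    have : 0 ≤ 30 - 29 * r := by linarith
    positivity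
  rw [← gap, Real.sq_sqrt hp, Real.sq_sqrt ha, Real.sq_sqrt hb] at gap_nonneg
  linarith [nonneg_of_mul_nonneg_right gap_nonneg hA]

end PsiR

section Density

variable {α : Type*} [MeasurableSpace α] {ν : Measure α} {s t t' : α → ℝ}

/-- `t` is a probability density with respect to `ν`; `IsDensityT` says this of every
coordinate. -/
structure IsDensity (ν : Measure α) (t : α → ℝ) : Prop where
  measurable : Measurable t
  nonneg : ∀ x, 0 ≤ t x
  lintegral_eq_one : ∫⁻ x, ENNReal.ofReal (t x) ∂ν = 1

/-- The law `t·ν` with density `t` with respect to `ν`, a factor of `Plaw`. -/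
def densityLaw (ν : Measure α) (t : α → ℝ) : Measure α :=
  ν.withDensity fun x => ENNReal.ofReal (t x)

namespace IsDensity

theorem integrable (ht : IsDensity ν t) : Integrable t ν := by
  refine ⟨ht.measurable.aestronglyMeasurable, ?_⟩
  rw [hasFiniteIntegral_iff_ofReal (Eventually.of_forall ht.nonneg), ht.lintegral_eq_one]
  exact ENNReal.one_lt_top

theorem integral_eq_one (ht : IsDensity ν t) : ∫ x, t x ∂ν = 1 := by
  rw [integral_eq_lintegral_of_nonneg_ae (Eventually.of_forall ht.nonneg)
    ht.measurable.aestronglyMeasurable, ht.lintegral_eq_one, ENNReal.toReal_one]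

theorem isProbabilityMeasure (ht : IsDensity ν t) : IsProbabilityMeasure (densityLaw ν t) :=
  ⟨by rw [densityLaw, withDensity_apply _ .univ, Measure.restrict_univ, ht.lintegral_eq_one]⟩

theorem memLp_sqrt (ht : IsDensity ν t) : MemLp (fun x => √(t x)) 2 ν := by
  refine (memLp_two_iff_integrable_sq ht.measurable.sqrt.aestronglyMeasurable).2 ?_
  simpa only [Real.sq_sqrt (ht.nonneg _)] using ht.integrable

theorem integrable_sqrt_sub_sqrt_sq (hs : IsDensity ν s) (ht : IsDensity ν t) :
    Integrable (fun x => (√(s x) - √(t x)) ^ 2) ν :=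
  (hs.memLp_sqrt.sub ht.memLp_sqrt).integrable_sq

theorem integral_densityLaw (hs : IsDensity ν s) (g : α → ℝ) :
    ∫ x, g x ∂densityLaw ν s = ∫ x, s x * g x ∂ν := by
  rw [densityLaw, integral_withDensity_eq_integral_toReal_smul hs.measurable.ennreal_ofReal
    (Eventually.of_forall fun _ => ENNReal.ofReal_lt_top)]
  simp only [ENNReal.toReal_ofReal (hs.nonneg _), smul_eq_mul]

theorem integrable_mul (hs : IsDensity ν s) {g : α → ℝ} (hg : BddMeasurable g) :
    Integrable (fun x => s x * g x) ν :=
  let ⟨_, hC⟩ := hg.exists_abs_le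
  hs.integrable.mul_bdd hg.measurable.aestronglyMeasurable (Eventually.of_forall hC)

theorem bddMeasurable_psiR (ht : IsDensity ν t) (ht' : IsDensity ν t') :
    BddMeasurable fun x => psiR (t x) (t' x) :=
  ⟨measurable_psiR.comp (ht.measurable.prodMk ht'.measurable), 1,
    fun x => abs_psiR_le_one (ht.nonneg x) (ht'.nonneg x)⟩

theorem integral_psiR_le (hs : IsDensity ν s) (ht : IsDensity ν t) (ht' : IsDensity ν t') :
    ∫ x, psiR (t x) (t' x) ∂densityLaw ν s ≤ 4 * hellSq ν s t - 3 / 8 * hellSq ν s t' := by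
  have i1 := (hs.integrable_sqrt_sub_sqrt_sq ht).const_mul 2
  have i2 := (hs.integrable_sqrt_sub_sqrt_sq ht').const_mul (3 / 16)
  have i3 := (ht'.integrable.sub' ht.integrable).div_const 4
  have mass : ∫ x, (t' x - t x) / 4 ∂ν = 0 := by
    rw [integral_div, integral_sub ht'.integrable ht.integrable, ht.integral_eq_one,
      ht'.integral_eq_one, sub_self, zero_div]
  calc ∫ x, psiR (t x) (t' x) ∂densityLaw ν s
      = ∫ x, s x * psiR (t x) (t' x) ∂ν := hs.integral_densityLaw _
    _ ≤ ∫ x, (2 * (√(s x) - √(t x)) ^ 2 - 3 / 16 * (√(s x) - √(t' x)) ^ 2 +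
          (t' x - t x) / 4) ∂ν :=
        integral_mono (hs.integrable_mul (ht.bddMeasurable_psiR ht')) ((i1.sub' i2).add i3)
          fun x => mul_psiR_le (hs.nonneg x) (ht.nonneg x) (ht'.nonneg x)
    _ = 4 * hellSq ν s t - 3 / 8 * hellSq ν s t' := by
        rw [integral_add (i1.sub' i2) i3, integral_sub i1 i2,
          integral_const_mul, integral_const_mul, mass, hellSq, hellSq]
        ring

theorem integral_psiR_sq_le (hs : IsDensity ν s) (ht : IsDensity ν t) (ht' : IsDensity ν t') :
    ∫ x, psiR (t x) (t' x) ^ 2 ∂densityLaw ν s ≤ 2 * hellSq ν s t + 2 * hellSq ν s t' := by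
  have i1 := hs.integrable_sqrt_sub_sqrt_sq ht
  have i2 := hs.integrable_sqrt_sub_sqrt_sq ht'
  calc ∫ x, psiR (t x) (t' x) ^ 2 ∂densityLaw ν s
      = ∫ x, s x * psiR (t x) (t' x) ^ 2 ∂ν := hs.integral_densityLaw _
    _ ≤ ∫ x, ((√(s x) - √(t x)) ^ 2 + (√(s x) - √(t' x)) ^ 2) ∂ν :=
        integral_mono (hs.integrable_mul (ht.bddMeasurable_psiR ht').sq) (i1.add i2)
          fun x => mul_psiR_sq_le (hs.nonneg x) (ht.nonneg x) (ht'.nonneg x)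
    _ = 2 * hellSq ν s t + 2 * hellSq ν s t' := by
        rw [integral_add i1 i2, hellSq, hellSq]
        ring

theorem dist_toLp_sqrt_sq (hs : IsDensity ν s) (ht : IsDensity ν t) :
    dist (hs.memLp_sqrt.toLp _) (ht.memLp_sqrt.toLp _) ^ 2 = 2 * hellSq ν s t := by
  rw [dist_eq_norm, ← MemLp.toLp_sub, ← real_inner_self_eq_norm_sq, L2.inner_def, hellSq,
    ← mul_assoc, mul_one_div_cancel two_ne_zero, one_mul]
  refine integral_congr_ae ?_
  filter_upwards [(hs.memLp_sqrt.sub ht.memLp_sqrt).coeFn_toLp] with x hx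
  rw [hx, real_inner_self_eq_norm_sq, Real.norm_eq_abs, sq_abs, Pi.sub_apply]

end IsDensity

theorem hellSq_nonneg (ν : Measure α) (s t : α → ℝ) : 0 ≤ hellSq ν s t :=
  mul_nonneg one_half_pos.le (integral_nonneg fun _ => sq_nonneg _)

end Density

section Hellinger

variable {n : ℕ} {𝒳 : Fin n → Type*} [∀ i, MeasurableSpace (𝒳 i)] {μ : ∀ i, Measure (𝒳 i)}
  {s t t' : ∀ i, 𝒳 i → ℝ}

theorem IsDensityT.isDensity (ht : IsDensityT μ t) (i : Fin n) : IsDensity (μ i) (t i) :=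
  ⟨(ht i).1, (ht i).2.1, (ht i).2.2⟩

theorem isProbabilityMeasure_Plaw (hs : IsDensityT μ s) : IsProbabilityMeasure (Plaw μ s) := by
  have (i : Fin n) := (hs.isDensity i).isProbabilityMeasure
  exact inferInstanceAs (IsProbabilityMeasure (Measure.pi fun i => densityLaw (μ i) (s i)))

theorem bH_sq (μ : ∀ i, Measure (𝒳 i)) (s t : ∀ i, 𝒳 i → ℝ) :
    bH μ s t ^ 2 = ∑ i, hellSq (μ i) (s i) (t i) :=
  Real.sq_sqrt (Finset.sum_nonneg fun _ _ => hellSq_nonneg _ _ _)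

theorem bH_nonneg (μ : ∀ i, Measure (𝒳 i)) (s t : ∀ i, 𝒳 i → ℝ) : 0 ≤ bH μ s t :=
  Real.sqrt_nonneg _

/-- The square roots of a tuple of densities, as a point of the Hilbert space `⨁ᵢ L²(μᵢ)`, in which
`√2 𝐡` is the distance. -/
def sqrtDensity (ht : IsDensityT μ t) : PiLp 2 fun i => Lp ℝ 2 (μ i) :=
  WithLp.toLp 2 fun i => (ht.isDensity i).memLp_sqrt.toLp _

theorem dist_sqrtDensity (hs : IsDensityT μ s) (ht : IsDensityT μ t) :
    dist (sqrtDensity hs) (sqrtDensity ht) = √2 * bH μ s t := by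
  have dist_sq : dist (sqrtDensity hs) (sqrtDensity ht) ^ 2 = 2 * bH μ s t ^ 2 := by
    rw [PiLp.dist_sq_eq_of_L2, bH_sq, Finset.mul_sum]
    exact Finset.sum_congr rfl fun i _ => (hs.isDensity i).dist_toLp_sqrt_sq (ht.isDensity i)
  rw [← Real.sqrt_sq dist_nonneg, dist_sq, Real.sqrt_mul zero_le_two,
    Real.sqrt_sq (bH_nonneg _ _ _)]

theorem bH_triangle (hs : IsDensityT μ s) (ht : IsDensityT μ t) (ht' : IsDensityT μ t') :
    bH μ s t' ≤ bH μ s t + bH μ t t' := by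
  have := dist_triangle (sqrtDensity hs) (sqrtDensity ht) (sqrtDensity ht')
  rw [dist_sqrtDensity, dist_sqrtDensity, dist_sqrtDensity, ← mul_add] at this
  exact le_of_mul_le_mul_left this (by positivity)

end Hellinger

section PsiDeviation

variable {n : ℕ} {𝒳 : Fin n → Type*} [∀ i, MeasurableSpace (𝒳 i)] {μ : ∀ i, Measure (𝒳 i)}
  {s t t' : ∀ i, 𝒳 i → ℝ}

/-- The contribution of the coordinate `i` to the centred process `Ψ(X,𝐭,𝐭′) − E_𝐬 Ψ(X,𝐭,𝐭′)`. -/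
def psiDev (μ : ∀ i, Measure (𝒳 i)) (s t t' : ∀ i, 𝒳 i → ℝ) (i : Fin n) (y : 𝒳 i) : ℝ :=
  psiR (t i y) (t' i y) - ∫ y', psiR (t i y') (t' i y') ∂densityLaw (μ i) (s i)

theorem bddMeasurable_psiDev (ht : IsDensityT μ t) (ht' : IsDensityT μ t') (i : Fin n) :
    BddMeasurable (psiDev μ s t t' i) :=
  ((ht.isDensity i).bddMeasurable_psiR (ht'.isDensity i)).sub (.const _)

variable (hs : IsDensityT μ s) (ht : IsDensityT μ t) (ht' : IsDensityT μ t')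
include hs ht ht'

theorem abs_psiDev_le_two (i : Fin n) (y : 𝒳 i) : |psiDev μ s t t' i y| ≤ 2 := by
  have := (hs.isDensity i).isProbabilityMeasure
  have abs_le (y : 𝒳 i) : |psiR (t i y) (t' i y)| ≤ 1 :=
    abs_psiR_le_one ((ht.isDensity i).nonneg y) ((ht'.isDensity i).nonneg y)
  have mean_le := norm_integral_le_of_norm_le_const (μ := densityLaw (μ i) (s i))
    (f := fun y => psiR (t i y) (t' i y)) (Eventually.of_forall abs_le)
  rw [probReal_univ, mul_one, Real.norm_eq_abs] at mean_le
  exact (abs_sub _ _).trans (by linarith [abs_le y])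

theorem integral_psiDev (i : Fin n) :
    ∫ y, psiDev μ s t t' i y ∂densityLaw (μ i) (s i) = 0 := by
  have := (hs.isDensity i).isProbabilityMeasure
  have hψ := (ht.isDensity i).bddMeasurable_psiR (ht'.isDensity i)
  simp only [psiDev]
  rw [integral_sub (hψ.integrable _) (integrable_const _), integral_const, probReal_univ, one_smul,
    sub_self]

open ProbabilityTheory in
theorem sum_integral_psiDev_sq_le :
    ∑ i, ∫ y, psiDev μ s t t' i y ^ 2 ∂densityLaw (μ i) (s i) ≤
      2 * bH μ s t ^ 2 + 2 * bH μ s t' ^ 2 := by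
  simp only [bH_sq, Finset.mul_sum, ← Finset.sum_add_distrib]
  refine Finset.sum_le_sum fun i _ => ?_
  have := (hs.isDensity i).isProbabilityMeasure
  have hψ := (ht.isDensity i).bddMeasurable_psiR (ht'.isDensity i)
  calc ∫ y, psiDev μ s t t' i y ^ 2 ∂densityLaw (μ i) (s i)
      = Var[fun y => psiR (t i y) (t' i y); densityLaw (μ i) (s i)] :=
        (variance_eq_integral hψ.measurable.aemeasurable).symm
    _ ≤ ∫ y, psiR (t i y) (t' i y) ^ 2 ∂densityLaw (μ i) (s i) :=
        variance_le_expectation_sq hψ.measurable.aestronglyMeasurable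
    _ ≤ _ := (hs.isDensity i).integral_psiR_sq_le (ht.isDensity i) (ht'.isDensity i)

theorem integral_Psi :
    ∫ x, Psi x t t' ∂Plaw μ s =
      ∑ i, ∫ y, psiR (t i y) (t' i y) ∂densityLaw (μ i) (s i) := by
  have (i : Fin n) := (hs.isDensity i).isProbabilityMeasure
  have hψ (i : Fin n) := (ht.isDensity i).bddMeasurable_psiR (ht'.isDensity i)
  change ∫ x, ∑ i, psiR (t i (x i)) (t' i (x i)) ∂Measure.pi (fun i => densityLaw (μ i) (s i)) = _
  rw [integral_finsetSum _ fun i _ => ((hψ i).comp (measurable_pi_apply i)).integrable _]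
  exact Finset.sum_congr rfl fun i _ =>
    integral_comp_eval (hψ i).measurable.aestronglyMeasurable

theorem integral_Psi_le :
    ∫ x, Psi x t t' ∂Plaw μ s ≤ 4 * bH μ s t ^ 2 - 3 / 8 * bH μ s t' ^ 2 := by
  simp only [integral_Psi hs ht ht', bH_sq, Finset.mul_sum, ← Finset.sum_sub_distrib]
  exact Finset.sum_le_sum fun i _ =>
    (hs.isDensity i).integral_psiR_le (ht.isDensity i) (ht'.isDensity i)

theorem Psi_sub_integral_Psi (x : ∀ i, 𝒳 i) :
    Psi x t t' - ∫ x', Psi x' t t' ∂Plaw μ s = ∑ i, psiDev μ s t t' i (x i) := by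
  rw [integral_Psi hs ht ht', Psi, ← Finset.sum_sub_distrib]
  rfl

end PsiDeviation

section BallPair

variable {n : ℕ} {𝒳 : Fin n → Type*} [∀ i, MeasurableSpace (𝒳 i)] {μ : ∀ i, Measure (𝒳 i)}
  {s : ∀ i, 𝒳 i → ℝ} {S : Set (∀ i, 𝒳 i → ℝ)}

/-- The pairs `(𝐭,𝐭′)` in the Hellinger ball `B^S(𝐬,y)`, spelled as in `wS`. -/
abbrev BallPair (μ : ∀ i, Measure (𝒳 i)) (s : ∀ i, 𝒳 i → ℝ) (S : Set (∀ i, 𝒳 i → ℝ))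
    (y : ℝ) : Type _ :=
  {p : (∀ i, 𝒳 i → ℝ) × (∀ i, 𝒳 i → ℝ) //
    p.1 ∈ S ∧ p.2 ∈ S ∧ bH μ s p.1 ≤ y ∧ bH μ s p.2 ≤ y}

theorem countable_ballPair (hS : S.Countable) (y : ℝ) : Countable (BallPair μ s S y) := by
  have subset_prod : {p : (∀ i, 𝒳 i → ℝ) × (∀ i, 𝒳 i → ℝ) |
      p.1 ∈ S ∧ p.2 ∈ S ∧ bH μ s p.1 ≤ y ∧ bH μ s p.2 ≤ y} ⊆ S ×ˢ S :=
    fun _ hp => ⟨hp.1, hp.2.1⟩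
  exact ((hS.prod hS).mono subset_prod).to_subtype

theorem wS_of_isEmpty {y : ℝ} (h : IsEmpty (BallPair μ s S y)) : wS μ s S y = 1 :=
  if_neg (not_nonempty_iff.2 h)

variable (hs : IsDensityT μ s) (hS : ∀ t ∈ S, IsDensityT μ t)
include hs hS

theorem wS_of_nonempty {y : ℝ} (h : Nonempty (BallPair μ s S y)) :
    wS μ s S y =
      ∫ x, ⨆ p : BallPair μ s S y, |∑ i, psiDev μ s p.1.1 p.1.2 i (x i)| ∂Plaw μ s := by
  unfold wS
  rw [if_pos h]
  refine integral_congr_ae (Eventually.of_forall fun x => iSup_congr fun p => ?_)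
  rw [Psi_sub_integral_Psi hs (hS _ p.2.1) (hS _ p.2.2.1)]

theorem integral_iSup_abs_sum_psiDev_le_wS (y : ℝ) :
    ∫ x, ⨆ p : BallPair μ s S y, |∑ i, psiDev μ s p.1.1 p.1.2 i (x i)| ∂Plaw μ s ≤
      wS μ s S y := by
  rcases isEmpty_or_nonempty (BallPair μ s S y) with h | h
  · simp [wS_of_isEmpty h]
  · exact (wS_of_nonempty hs hS h).ge

theorem wS_le (y : ℝ) : wS μ s S y ≤ 2 * n + 1 := by
  rcases isEmpty_or_nonempty (BallPair μ s S y) with h | h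
  · rw [wS_of_isEmpty h]
    linarith [n.cast_nonneg (α := ℝ)]
  rw [wS_of_nonempty hs hS h]
  have := isProbabilityMeasure_Plaw hs
  have abs_sum_le (p : BallPair μ s S y) (x : ∀ i, 𝒳 i) :
      |∑ i, psiDev μ s p.1.1 p.1.2 i (x i)| ≤ 2 * n :=
    (Finset.abs_sum_le_sum_abs _ _).trans <| (Finset.sum_le_sum fun i _ =>
      abs_psiDev_le_two hs (hS _ p.2.1) (hS _ p.2.2.1) i (x i)).trans_eq (by simp [mul_comm])
  calc ∫ x, ⨆ p : BallPair μ s S y, |∑ i, psiDev μ s p.1.1 p.1.2 i (x i)| ∂Plaw μ s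
      ≤ ∫ _, 2 * (n : ℝ) ∂Plaw μ s :=
        integral_mono_of_nonneg
          (Eventually.of_forall fun x => Real.iSup_nonneg fun p => abs_nonneg _)
          (integrable_const _) (Eventually.of_forall fun x => ciSup_le fun p => abs_sum_le p x)
    _ ≤ 2 * n + 1 := by simp

theorem wS_le_of_epsS_lt {y : ℝ} (hy : 1 ≤ y) (hε : epsS μ s S < y) :
    wS μ s S y ≤ 6 / 1000 * y ^ 2 := by
  by_contra! h
  refine hε.not_ge (le_csSup ⟨(2 * n + 1) / (6 / 1000), fun z hz => ?_⟩ ⟨hy, h⟩)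
  rw [le_div_iff₀ (by norm_num)]
  nlinarith [hz.1, hz.2.trans_le (wS_le hs hS z)]

theorem measure_iUnion_ballPair_le (hSc : S.Countable) {y : ℝ} (hy : 1 ≤ y)
    (hε : epsS μ s S < y) (ξ : ℝ) :
    Plaw μ s (⋃ p : BallPair μ s S y,
        {x | 0.0085 * y ^ 2 + 24000 * ξ ≤ ∑ i, psiDev μ s p.1.1 p.1.2 i (x i)}) ≤
      ENNReal.ofReal (exp (-ξ)) := by
  have (i : Fin n) := (hs.isDensity i).isProbabilityMeasure
  have := countable_ballPair (μ := μ) (s := s) hSc y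
  have threshold : (6 / 1000 * y ^ 2 + 1 / 3200 * (4 * y ^ 2)) / (1 - 3500 * (1 / 24000)) +
      ξ / (1 / 24000) ≤ 0.0085 * y ^ 2 + 24000 * ξ := by
    norm_num [div_div_eq_mul_div]
    linarith [sq_nonneg y]
  refine measure_iUnion_le_sum_le_exp_neg (P := fun i => densityLaw (μ i) (s i))
    (f := fun p : BallPair μ s S y => psiDev μ s p.1.1 p.1.2)
    (b := 2) (σ := 4 * y ^ 2) (B := 6 / 1000 * y ^ 2) (c := 1 / 3200) (C := 3500) (l := 1 / 24000)
    (fun p => bddMeasurable_psiDev (hS _ p.2.1) (hS _ p.2.2.1))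
    (fun p => abs_psiDev_le_two hs (hS _ p.2.1) (hS _ p.2.2.1))
    (fun p => integral_psiDev hs (hS _ p.2.1) (hS _ p.2.2.1)) (fun p => ?_)
    ((integral_iSup_abs_sum_psiDev_le_wS hs hS y).trans (wS_le_of_epsS_lt hs hS hy hε))
    (by norm_num) (by norm_num) (by norm_num) (by norm_num) threshold
  have h1 := pow_le_pow_left₀ (bH_nonneg μ s p.1.1) p.2.2.2.1 2
  have h2 := pow_le_pow_left₀ (bH_nonneg μ s p.1.2) p.2.2.2.2 2
  exact (sum_integral_psiDev_sq_le hs (hS _ p.2.1) (hS _ p.2.2.1)).trans (by linarith)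

end BallPair

section Peeling

/-- The geometric grid of radii over which the deviation bound is peeled. The offset `11000000`
makes the squared radii large enough to absorb the confidence levels of `badEvent`, linear in
`j`. -/
def peelRadius (ε : ℝ) (j : ℕ) : ℝ := (21 / 20) ^ j * √(ε ^ 2 + 11000000)

theorem peelRadius_succ_sq (ε : ℝ) (j : ℕ) :
    peelRadius ε (j + 1) ^ 2 = 1.1025 * peelRadius ε j ^ 2 := by
  unfold peelRadius
  ring

theorem le_peelRadius_sq (ε : ℝ) (j : ℕ) :
    (1 + j / 20) ^ 2 * (ε ^ 2 + 11000000) ≤ peelRadius ε j ^ 2 := by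
  have bernoulli : 1 + (j : ℝ) / 20 ≤ (21 / 20) ^ j := by
    have := one_add_mul_le_pow (a := (1 / 20 : ℝ)) (by norm_num) j
    norm_num at this ⊢
    linarith
  rw [peelRadius, mul_pow, Real.sq_sqrt (by positivity)]
  gcongr

theorem sq_add_le_peelRadius_sq (ε : ℝ) (j : ℕ) : ε ^ 2 + 11000000 ≤ peelRadius ε j ^ 2 := by
  refine le_trans (le_mul_of_one_le_left (by positivity) ?_) (le_peelRadius_sq ε j)
  exact one_le_pow₀ (le_add_of_nonneg_right (by positivity))

theorem peelRadius_nonneg (ε : ℝ) (j : ℕ) : 0 ≤ peelRadius ε j :=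
  mul_nonneg (by positivity) (Real.sqrt_nonneg _)

theorem one_le_peelRadius (ε : ℝ) (j : ℕ) : 1 ≤ peelRadius ε j := by
  nlinarith [sq_add_le_peelRadius_sq ε j, peelRadius_nonneg ε j, sq_nonneg ε]

theorem lt_peelRadius (ε : ℝ) (j : ℕ) : ε < peelRadius ε j :=
  lt_of_pow_lt_pow_left₀ 2 (peelRadius_nonneg ε j) (by linarith [sq_add_le_peelRadius_sq ε j])

theorem exists_le_peelRadius (ε m : ℝ) : ∃ j, m ≤ peelRadius ε j := by
  obtain ⟨j, hj⟩ := pow_unbounded_of_one_lt m (by norm_num : (1 : ℝ) < 21 / 20)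
  refine ⟨j, hj.le.trans (le_mul_of_one_le_right (by positivity) ?_)⟩
  exact Real.one_le_sqrt.2 (by linarith [sq_nonneg ε])

theorem exists_peelRadius (ε m : ℝ) :
    ∃ j, m ≤ peelRadius ε j ∧
      0.0085 * peelRadius ε j ^ 2 + 24000 * (3 + j / 10) ≤
        0.01 * m ^ 2 + 0.016 * ε ^ 2 + 168000 := by
  have hex := exists_le_peelRadius ε m
  refine ⟨Nat.find hex, Nat.find_spec hex, ?_⟩
  rcases hj : Nat.find hex with - | k
  · have : peelRadius ε 0 ^ 2 = ε ^ 2 + 11000000 := by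
      rw [peelRadius, pow_zero, one_mul, Real.sq_sqrt (by positivity)]
    rw [this]
    norm_num
    linarith [sq_nonneg m, sq_nonneg ε]
  · have hk : peelRadius ε k < m := not_le.1 (Nat.find_min hex (by omega))
    have sq_lt := pow_lt_pow_left₀ hk (peelRadius_nonneg ε k) two_ne_zero
    have growth : (1 + k / 20) ^ 2 * 11000000 ≤ peelRadius ε k ^ 2 :=
      le_trans (by gcongr; linarith [sq_nonneg ε]) (le_peelRadius_sq ε k)
    rw [peelRadius_succ_sq]
    push_cast
    nlinarith [sq_nonneg ((k : ℝ) - 49), sq_nonneg ε]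

theorem tsum_ofReal_exp_neg_le (ξ : ℝ) :
    ∑' j : ℕ, ENNReal.ofReal (exp (-(ξ + 3 + j / 10))) ≤ ENNReal.ofReal (exp (-ξ)) := by
  have ratio_le : exp (-(1 / 10)) ≤ 10 / 11 := by
    rw [exp_neg, inv_le_comm₀ (exp_pos _) (by norm_num)]
    linarith [add_one_le_exp (1 / 10 : ℝ)]
  have first_le : exp (-3) ≤ 1 / 11 := by
    rw [exp_neg, inv_le_comm₀ (exp_pos _) (by norm_num)]
    calc (1 / 11 : ℝ)⁻¹ ≤ 2.7 ^ 3 := by norm_num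
      _ ≤ exp 1 ^ 3 := by gcongr; linarith [exp_one_gt_d9]
      _ = exp 3 := by rw [← exp_nat_mul]; norm_num
  have term_le (j : ℕ) : exp (-(ξ + 3 + j / 10)) ≤ exp (-ξ) * (1 / 11) * (10 / 11) ^ j := by
    calc exp (-(ξ + 3 + j / 10)) = exp (-ξ) * exp (-3) * exp (-(1 / 10)) ^ j := by
          rw [← exp_nat_mul, ← exp_add, ← exp_add]
          ring_nf
      _ ≤ _ := by gcongr
  have total := (hasSum_geometric_of_lt_one (r := (10 / 11 : ℝ)) (by norm_num)
    (by norm_num)).mul_left (exp (-ξ) * (1 / 11))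
  calc ∑' j : ℕ, ENNReal.ofReal (exp (-(ξ + 3 + j / 10)))
      ≤ ∑' j : ℕ, ENNReal.ofReal (exp (-ξ) * (1 / 11) * (10 / 11) ^ j) :=
        ENNReal.tsum_le_tsum fun j => ENNReal.ofReal_le_ofReal (term_le j)
    _ = ENNReal.ofReal (exp (-ξ)) := by
        rw [← ENNReal.ofReal_tsum_of_nonneg (fun j => by positivity) total.summable, total.tsum_eq]
        norm_num [mul_assoc]

end Peeling

section BadEvent

variable {n : ℕ} {𝒳 : Fin n → Type*} [∀ i, MeasurableSpace (𝒳 i)] {μ : ∀ i, Measure (𝒳 i)}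
  {s : ∀ i, 𝒳 i → ℝ} {S : Set (∀ i, 𝒳 i → ℝ)}

/-- The complement of the event `Ω_ξ`: on some ball of the peeling grid the centred process reaches
its deviation threshold. The confidence level increases with the radius, so that the
probabilities can be summed. -/
def badEvent (μ : ∀ i, Measure (𝒳 i)) (s : ∀ i, 𝒳 i → ℝ) (S : Set (∀ i, 𝒳 i → ℝ)) (ξ : ℝ) :
    Set (∀ i, 𝒳 i) :=
  ⋃ j : ℕ, ⋃ p : BallPair μ s S (peelRadius (epsS μ s S) j),
    {x | 0.0085 * peelRadius (epsS μ s S) j ^ 2 + 24000 * (ξ + 3 + j / 10) ≤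
      ∑ i, psiDev μ s p.1.1 p.1.2 i (x i)}

theorem measurableSet_badEvent (hS : ∀ t ∈ S, IsDensityT μ t) (hSc : S.Countable) (ξ : ℝ) :
    MeasurableSet (badEvent μ s S ξ) := by
  refine .iUnion fun j => ?_
  have := countable_ballPair (μ := μ) (s := s) hSc (peelRadius (epsS μ s S) j)
  exact .iUnion fun p => measurableSet_le measurable_const <|
    Finset.measurable_fun_sum _ fun i _ =>
      (bddMeasurable_psiDev (hS _ p.2.1) (hS _ p.2.2.1) i).measurable.comp (measurable_pi_apply i)

variable (hs : IsDensityT μ s) (hS : ∀ t ∈ S, IsDensityT μ t)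
include hs hS

theorem measure_badEvent_le (hSc : S.Countable) (ξ : ℝ) :
    Plaw μ s (badEvent μ s S ξ) ≤ ENNReal.ofReal (exp (-ξ)) :=
  (measure_iUnion_le _).trans <| (ENNReal.tsum_le_tsum fun j =>
    measure_iUnion_ballPair_le hs hS hSc (one_le_peelRadius _ j) (lt_peelRadius _ j) _).trans
      (tsum_ofReal_exp_neg_le ξ)

theorem le_measure_compl_badEvent (hSc : S.Countable) (ξ : ℝ) :
    ENNReal.ofReal (1 - exp (-ξ)) ≤ Plaw μ s (badEvent μ s S ξ)ᶜ := by
  have := isProbabilityMeasure_Plaw hs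
  rw [prob_compl_eq_one_sub (measurableSet_badEvent hS hSc ξ), ENNReal.ofReal_sub _ (exp_pos _).le,
    ENNReal.ofReal_one]
  exact tsub_le_tsub_left (measure_badEvent_le hs hS hSc ξ) 1

theorem Psi_le_of_notMem_badEvent {ξ : ℝ} (hξ : 0 ≤ ξ) {x : ∀ i, 𝒳 i}
    (hx : x ∉ badEvent μ s S ξ) {t t' : ∀ i, 𝒳 i → ℝ} (ht : t ∈ S) (ht' : t' ∈ S) :
    Psi x t t' ≤ 4.01 * bH μ s t ^ 2 - 0.365 * bH μ s t' ^ 2 +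
      16 / 1000 * epsS μ s S ^ 2 + 70000 * (ξ + 2.4) := by
  set m := max (bH μ s t) (bH μ s t')
  obtain ⟨j, hm, slack⟩ := exists_peelRadius (epsS μ s S) m
  have deviation : Psi x t t' - ∫ x', Psi x' t t' ∂Plaw μ s <
      0.0085 * peelRadius (epsS μ s S) j ^ 2 + 24000 * (ξ + 3 + j / 10) := by
    rw [Psi_sub_integral_Psi hs (hS t ht) (hS t' ht')]
    by_contra! h
    exact hx <| mem_iUnion₂.2
      ⟨j, ⟨(t, t'), ht, ht', (le_max_left _ _).trans hm, (le_max_right _ _).trans hm⟩, h⟩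
  have mean_le := integral_Psi_le hs (hS t ht) (hS t' ht')
  have max_sq_le : m ^ 2 ≤ bH μ s t ^ 2 + bH μ s t' ^ 2 := by
    rcases max_choice (bH μ s t) (bH μ s t') with h | h <;>
      simp only [m, h, le_add_iff_nonneg_left, le_add_iff_nonneg_right, sq_nonneg]
  linarith

end BadEvent

section Extension

variable {n : ℕ} {𝒳 : Fin n → Type*}

theorem measurable_Psi_left [mS : MeasurableSpace (∀ i, 𝒳 i → ℝ)]
    (hBorel : borel (∀ i, 𝒳 i → ℝ) ≤ mS) (x : ∀ i, 𝒳 i) (t' : ∀ i, 𝒳 i → ℝ) :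
    Measurable fun t : ∀ i, 𝒳 i → ℝ => Psi x t t' := by
  have : @OpensMeasurableSpace _ _ mS := ⟨hBorel⟩
  have hcont (i : Fin n) : Continuous fun t : ∀ i, 𝒳 i → ℝ => t i (x i) := by fun_prop
  exact Finset.measurable_fun_sum _ fun i _ =>
    measurable_psiR.comp ((hcont i).measurable.prodMk measurable_const)

variable [∀ i, MeasurableSpace (𝒳 i)] {μ : ∀ i, Measure (𝒳 i)}

theorem Psi_le_of_tendsto {s t t' : ∀ i, 𝒳 i → ℝ} {S : Set (∀ i, 𝒳 i → ℝ)}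
    (hs : IsDensityT μ s) (hS : ∀ t ∈ S, IsDensityT μ t) (ht : IsDensityT μ t)
    {u : ℕ → ∀ i, 𝒳 i → ℝ} (hu : ∀ k, u k ∈ S)
    (hlim : Tendsto (fun k => bH μ t (u k)) atTop (nhds 0)) {x : ∀ i, 𝒳 i}
    (hΨ : Tendsto (fun k => Psi x (u k) t') atTop (nhds (Psi x t t'))) {c d : ℝ} (hc : 0 ≤ c)
    (hle : ∀ v ∈ S, Psi x v t' ≤ c * bH μ s v ^ 2 + d) :
    Psi x t t' ≤ c * bH μ s t ^ 2 + d := by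
  have rhs_lim : Tendsto (fun k => c * (bH μ s t + bH μ t (u k)) ^ 2 + d) atTop
      (nhds (c * (bH μ s t + 0) ^ 2 + d)) :=
    (((hlim.const_add _).pow 2).const_mul c).add_const d
  rw [add_zero] at rhs_lim
  refine le_of_tendsto_of_tendsto' hΨ rhs_lim fun k => (hle _ (hu k)).trans ?_
  gcongr
  · exact bH_nonneg _ _ _
  · exact bH_triangle hs ht (hS _ (hu k))

end Extension

theorem statement_1_general
    {n : ℕ} {𝒳 : Fin n → Type*} [∀ i, MeasurableSpace (𝒳 i)]
    (μ : ∀ i, Measure (𝒳 i))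
    [mS : MeasurableSpace (∀ i, 𝒳 i → ℝ)]
    (Sbar S : Set (∀ i, 𝒳 i → ℝ))
    (hBorel : borel (∀ i, 𝒳 i → ℝ) ≤ mS)
    (hmodel : ∀ t ∈ Sbar, IsDensityT μ t)
    (hSsub : S ⊆ Sbar) (hScount : S.Countable)
    (hApprox : ∀ t ∈ Sbar, ∀ t' ∈ S, ∃ u : ℕ → ∀ i, 𝒳 i → ℝ,
      (∀ k, u k ∈ S) ∧
      Tendsto (fun k => bH μ t (u k)) atTop (nhds 0) ∧
      ∀ x : ∀ i, 𝒳 i, Tendsto (fun k => Psi x (u k) t') atTop (nhds (Psi x t t')))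
    (s : ∀ i, 𝒳 i → ℝ) (hs : IsDensityT μ s)
    (ξ : ℝ) (hξ : 0 < ξ) :
    ∃ Ω : Set (∀ i, 𝒳 i), MeasurableSet Ω ∧
      ENNReal.ofReal (1 - Real.exp (-ξ)) ≤ Plaw μ s Ω ∧
      ∀ x ∈ Ω,
        (∀ t' ∈ S, @Measurable ↥Sbar ℝ (mS.comap Subtype.val) _
          fun t : ↥Sbar => Psi x (t : ∀ i, 𝒳 i → ℝ) t') ∧
        ∀ t ∈ Sbar, ∀ t' ∈ S,
          Psi x t t' ≤ 4.01 * bH μ s t ^ 2 - 0.365 * bH μ s t' ^ 2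
            + 16 / 1000 * epsS μ s S ^ 2 + 70000 * (ξ + 2.4) := by
  have hS (t : ∀ i, 𝒳 i → ℝ) (ht : t ∈ S) : IsDensityT μ t := hmodel t (hSsub ht)
  refine ⟨(badEvent μ s S ξ)ᶜ, (measurableSet_badEvent hS hScount ξ).compl,
    le_measure_compl_badEvent hs hS hScount ξ, fun x hx => ⟨fun t' _ => ?_, fun t ht t' ht' => ?_⟩⟩
  · exact (measurable_Psi_left hBorel x t').comp (comap_measurable _)
  · obtain ⟨u, hu, hlim, hΨ⟩ := hApprox t ht t' ht'
    have on_S (v : ∀ i, 𝒳 i → ℝ) (hv : v ∈ S) := Psi_le_of_notMem_badEvent hs hS hξ.le hx hv ht'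
    have := Psi_le_of_tendsto hs hS (hmodel t ht) hu hlim (hΨ x) (c := 4.01)
      (d := -0.365 * bH μ s t' ^ 2 + 16 / 1000 * epsS μ s S ^ 2 + 70000 * (ξ + 2.4))
      (by norm_num) fun v hv => by linarith [on_S v hv]
    linarith

theorem statement_1
    {n : ℕ} {𝒳 : Fin n → Type*} [∀ i, MeasurableSpace (𝒳 i)]
    (μ : ∀ i, Measure (𝒳 i)) [∀ i, SigmaFinite (μ i)]
    [mS : MeasurableSpace (∀ i, 𝒳 i → ℝ)]
    (Sbar S : Set (∀ i, 𝒳 i → ℝ))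
    -- Assumption 1-(i): 𝒮 contains the Borel σ-algebra of the topology of pointwise convergence
    (hBorel : borel (∀ i, 𝒳 i → ℝ) ≤ mS)
    -- the model consists of density tuples
    (hmodel : ∀ t ∈ Sbar, IsDensityT μ t)
    -- Assumption 1-(ii): countable subset with the approximation property
    (hSsub : S ⊆ Sbar) (hScount : S.Countable)
    (hApprox : ∀ t ∈ Sbar, ∀ t' ∈ S, ∃ u : ℕ → ∀ i, 𝒳 i → ℝ,
      (∀ k, u k ∈ S) ∧
      Tendsto (fun k => bH μ t (u k)) atTop (nhds 0) ∧
      ∀ x : ∀ i, 𝒳 i, Tendsto (fun k => Psi x (u k) t') atTop (nhds (Psi x t t')))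
    -- the true density
    (s : ∀ i, 𝒳 i → ℝ) (hs : IsDensityT μ s)
    (ξ : ℝ) (hξ : 0 < ξ) :
    ∃ Ω : Set (∀ i, 𝒳 i), MeasurableSet Ω ∧
      ENNReal.ofReal (1 - Real.exp (-ξ)) ≤ Plaw μ s Ω ∧
      ∀ x ∈ Ω,
        (∀ t' ∈ S, @Measurable ↥Sbar ℝ (mS.comap Subtype.val) _
          fun t : ↥Sbar => Psi x (t : ∀ i, 𝒳 i → ℝ) t') ∧
        ∀ t ∈ Sbar, ∀ t' ∈ S,
          Psi x t t' ≤ 4.01 * bH μ s t ^ 2 - 0.365 * bH μ s t' ^ 2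
            + 16 / 1000 * epsS μ s S ^ 2 + 70000 * (ξ + 2.4) :=
  statement_1_general μ Sbar S hBorel hmodel hSsub hScount hApprox s hs ξ hξ

end
end

section
/- Let g₁,…,g_J (J ≥ 1) be real-valued functions on an interval 𝐈 of ℝ and k a positive integer. If every element t of the density model S̄₀ is of the form t = Σ_{I∈𝒥(t)} exp(Σ_{j=1}^J θ_{I,j}gⱼ)·1_I, where 𝒥(t) is a partition of 𝐈 into at most k intervals (possibly depending on t) and θ_{I,j}∈ℝ, then the class ℱ = {ψ(√(t′/t)) : t,t′∈S̄₀} is weak VC-major with dimension at most ⌈9.4k(J+2)⌉ (the smallest integer ≥ 9.4k(J+2)). -/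
/-!
On the intersection of a piece of `t` and a piece of `t'`, the function `ψ(√(t'/t))` is an
increasing function of an element of the space `V` spanned by the `g j`, so there its superlevel
sets are traces of half-spaces, and by Radon's theorem these shatter at most `dim V + 1` points. Cut
`(2k - 1)(dim V + 2)` points into `2k - 1` consecutive blocks of `dim V + 2` points and choose in
each block a subset that no half-space cuts out. A cover by `m` intervals splits fewer than `m`
blocks, so for any `t` and `t'` some block lies in one piece of each, and there no superlevel set of
`ψ(√(t'/t))` cuts out the chosen subset.
-/

open MeasureTheory Real Set
open scoped Classical ENNReal

noncomputable section

/-- The class of sets `C` on `𝒴` is VC with dimension at most `d`. -/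
def VCdimLE {𝒴 : Type*} (C : Set (Set 𝒴)) (d : ℕ) : Prop :=
  ∀ F : Finset 𝒴,
    (∀ A : Finset 𝒴, A ⊆ F → ∃ c ∈ C, ∀ y ∈ F, y ∈ c ↔ y ∈ A) → F.card ≤ d

/-- A class `ℱ` of real-valued functions on `𝒴` is weak VC-major with dimension at
most `d`. -/
def WeakVCMajorLE {𝒴 : Type*} (ℱ : Set (𝒴 → ℝ)) (d : ℕ) : Prop :=
  ∀ u : ℝ, VCdimLE {B | ∃ f ∈ ℱ, B = {y | u < f y}} d

theorem VCdimLE.mono {𝒴 : Type*} {C : Set (Set 𝒴)} {d e : ℕ} (hC : VCdimLE C d) (hde : d ≤ e) :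
    VCdimLE C e :=
  fun F hF => (hC F hF).trans hde

theorem WeakVCMajorLE.mono {𝒴 : Type*} {ℱ : Set (𝒴 → ℝ)} {d e : ℕ} (hℱ : WeakVCMajorLE ℱ d)
    (hde : d ≤ e) : WeakVCMajorLE ℱ e :=
  fun u => (hℱ u).mono hde

theorem VCdimLE.exists_subset_forall_not_trace {𝒴 : Type*} {C : Set (Set 𝒴)} {d : ℕ}
    (hC : VCdimLE C d) {F : Finset 𝒴} (hF : d < F.card) :
    ∃ A ⊆ F, ∀ c ∈ C, ¬ ∀ y ∈ F, y ∈ c ↔ y ∈ A := by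
  by_contra! hshatter
  exact hF.not_ge (hC F hshatter)

theorem exists_convexHull_inter_nonempty_of_finrank_lt {𝕜 E ι : Type*} [Field 𝕜] [LinearOrder 𝕜]
    [IsStrictOrderedRing 𝕜] [AddCommGroup E] [Module 𝕜 E] [FiniteDimensional 𝕜 E] [Fintype ι]
    (p : ι → E) (h : Module.finrank 𝕜 E + 1 < Fintype.card ι) :
    ∃ A : Set ι, (convexHull 𝕜 (p '' A) ∩ convexHull 𝕜 (p '' Aᶜ)).Nonempty :=
  Convex.radon_partition fun hp =>
    (hp.card_le_finrank_succ.trans (Nat.succ_le_succ (Submodule.finrank_le _))).not_gt h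

theorem vcdimLE_preimage_isUpperSet {X : Type*} (V : Submodule ℝ (X → ℝ)) [FiniteDimensional ℝ V] :
    VCdimLE {s | ∃ f ∈ V, ∃ U : Set ℝ, IsUpperSet U ∧ s = f ⁻¹' U} (Module.finrank ℝ V + 1) := by
  intro F hF
  by_contra! hcard
  -- Points of `X` are placed in the dual of `V`, where elements of `V` become linear functionals.
  let p : F → Module.Dual ℝ V := fun x => LinearMap.proj (x : X) ∘ₗ V.subtype
  obtain ⟨A, ξ, hξA, hξAc⟩ := exists_convexHull_inter_nonempty_of_finrank_lt (𝕜 := ℝ) p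
    (by simpa [Subspace.dual_finrank_eq] using hcard)
  obtain ⟨_, ⟨f, hfV, U, hU, rfl⟩, hfA⟩ :=
    hF (F.filter (· ∈ Subtype.val '' A)) (Finset.filter_subset _ _)
  have hiff (x : F) : f x ∈ U ↔ x ∈ A := by simpa using hfA x x.2
  let φ : Module.Dual ℝ V →ₗ[ℝ] ℝ := Module.Dual.eval ℝ V ⟨f, hfV⟩
  have himage : p '' A ⊆ φ ⁻¹' U := image_subset_iff.2 fun x hx => (hiff x).2 hx
  have himage_compl : p '' Aᶜ ⊆ φ ⁻¹' Uᶜ := image_subset_iff.2 fun x hx => mt (hiff x).1 hx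
  have hin : φ ξ ∈ U :=
    convexHull_min himage (hU.ordConnected.convex.linear_preimage φ) hξA
  have hout : φ ξ ∈ Uᶜ :=
    convexHull_min himage_compl (hU.compl.ordConnected.convex.linear_preimage φ) hξAc
  exact hout hin

/-- A cover of a linear order by finitely many intervals. The intervals may overlap, and the cover
encodes a partition into intervals without its disjointness. -/
structure IsIntervalCover {X : Type*} [Preorder X] (𝒜 : Finset (Set X)) : Prop where
  ordConnected : ∀ P ∈ 𝒜, P.OrdConnected
  exists_mem : ∀ x, ∃ P ∈ 𝒜, x ∈ P

section Blocks

variable {α β X : Type*} [LinearOrder α] [Fintype α] [OrderTop α] [Preorder β] [BoundedOrder β]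
  [Preorder X]

theorem IsIntervalCover.card_split_blocks_lt {𝒜 : Finset (Set X)} (h𝒜 : IsIntervalCover 𝒜)
    {e : α ×ₗ β → X} (he : Monotone e) :
    (Finset.univ.filter fun a => ¬ ∃ P ∈ 𝒜, ∀ b, e (toLex (a, b)) ∈ P).card < 𝒜.card := by
  have block_subset {a : α} {P : Set X} (hP : P ∈ 𝒜) (hbot : e (toLex (a, ⊥)) ∈ P)
      {z : α ×ₗ β} (hz : e z ∈ P) (haz : toLex (a, ⊤) ≤ z) :
      ∃ Q ∈ 𝒜, ∀ b, e (toLex (a, b)) ∈ Q := by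
    refine ⟨P, hP, fun b => (h𝒜.ordConnected P hP).out hbot hz ⟨he ?_, he (le_trans ?_ haz)⟩⟩
    · exact Prod.Lex.toLex_mono ⟨le_rfl, bot_le⟩
    · exact Prod.Lex.toLex_mono ⟨le_rfl, le_top⟩
  have block_subset_of_lt {a a' : α} (haa' : a < a') {P : Set X} (hP : P ∈ 𝒜)
      (ha : e (toLex (a, ⊥)) ∈ P) (ha' : e (toLex (a', ⊥)) ∈ P) :=
    block_subset hP ha ha' (Prod.Lex.toLex_le_toLex.2 (Or.inl haa'))
  choose piece piece_mem mem_piece using fun a => h𝒜.exists_mem (e (toLex (a, ⊥)))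
  obtain ⟨Ptop, hPtop, htop⟩ := h𝒜.exists_mem (e (toLex (⊤, ⊤)))
  -- Sending a split block to the piece of its first point is injective and misses `Ptop`.
  refine (Finset.card_le_card_of_injOn piece (t := 𝒜.erase Ptop) ?_ ?_).trans_lt
    (Finset.card_erase_lt_of_mem hPtop)
  · intro a ha
    refine Finset.mem_erase.2 ⟨fun heq => (Finset.mem_filter.1 ha).2 ?_, piece_mem a⟩
    exact block_subset hPtop (heq ▸ mem_piece a) htop (Prod.Lex.toLex_mono ⟨le_top, le_rfl⟩)
  · intro a ha a' ha' heq
    rcases lt_trichotomy a a' with hlt | rfl | hlt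
    · exact absurd (block_subset_of_lt hlt (piece_mem a) (mem_piece a) (heq ▸ mem_piece a'))
        (Finset.mem_filter.1 ha).2
    · rfl
    · exact absurd (block_subset_of_lt hlt (piece_mem a') (mem_piece a') (heq ▸ mem_piece a))
        (Finset.mem_filter.1 ha').2

theorem IsIntervalCover.exists_block_subset_inter {𝒜 ℬ : Finset (Set X)} (h𝒜 : IsIntervalCover 𝒜)
    (hℬ : IsIntervalCover ℬ) {e : α ×ₗ β → X} (he : Monotone e)
    (hcard : 𝒜.card + ℬ.card ≤ Fintype.card α + 1) :
    ∃ a, ∃ P ∈ 𝒜, ∃ Q ∈ ℬ, ∀ b, e (toLex (a, b)) ∈ P ∩ Q := by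
  let split (𝒞 : Finset (Set X)) : Finset α :=
    Finset.univ.filter fun a => ¬ ∃ P ∈ 𝒞, ∀ b, e (toLex (a, b)) ∈ P
  have hsplit : (split 𝒜 ∪ split ℬ).card < (Finset.univ : Finset α).card := by
    have hlt𝒜 : (split 𝒜).card < 𝒜.card := h𝒜.card_split_blocks_lt he
    have hltℬ : (split ℬ).card < ℬ.card := hℬ.card_split_blocks_lt he
    have hunion := Finset.card_union_le (split 𝒜) (split ℬ)
    rw [Finset.card_univ]
    omega
  obtain ⟨a, -, ha⟩ := Finset.exists_mem_notMem_of_card_lt_card hsplit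
  simp only [split, Finset.mem_union, Finset.mem_filter, Finset.mem_univ, true_and, not_or,
    not_not] at ha
  obtain ⟨⟨P, hP, haP⟩, Q, hQ, haQ⟩ := ha
  exact ⟨a, P, hP, Q, hQ, fun b => ⟨haP b, haQ b⟩⟩

end Blocks

theorem exists_orderEmbedding_forall_mem {α X : Type*} [LinearOrder α] [Fintype α] [LinearOrder X]
    {F : Finset X} (h : Fintype.card α ≤ F.card) : ∃ e : α ↪o X, ∀ a, e a ∈ F :=
  ⟨(monoEquivOfFin α rfl).symm.toOrderEmbedding.trans
    ((Fin.castLEOrderEmb h).trans (F.orderEmbOfFin rfl)), fun _ => F.orderEmbOfFin_mem rfl _⟩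

theorem VCdimLE.of_intervalCovers {X : Type*} [LinearOrder X] {C D : Set (Set X)} {d n : ℕ}
    (hD : VCdimLE D d)
    (hC : ∀ c ∈ C, ∃ 𝒜 ℬ : Finset (Set X), IsIntervalCover 𝒜 ∧ IsIntervalCover ℬ ∧
      𝒜.card + ℬ.card ≤ n + 2 ∧
      ∀ P ∈ 𝒜, ∀ Q ∈ ℬ, ∃ s ∈ D, ∀ x ∈ P ∩ Q, x ∈ c ↔ x ∈ s) :
    VCdimLE C (n * (d + 1) + d) := by
  intro F hF
  by_contra! hcard
  obtain ⟨e, heF⟩ := exists_orderEmbedding_forall_mem (α := Fin (n + 1) ×ₗ Fin (d + 1)) (F := F)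
    (by rw [Fintype.card_lex, Fintype.card_prod, Fintype.card_fin, Fintype.card_fin]; linarith)
  let block (a : Fin (n + 1)) : Finset X := Finset.univ.image fun b => e (toLex (a, b))
  have block_card (a) : d < (block a).card := by
    rw [Finset.card_image_of_injective _ fun b b' h => by simpa using h]
    simp
  choose A hA hAD using fun a => hD.exists_subset_forall_not_trace (block_card a)
  have exists_mem_iff (a b) : (∃ a', e (toLex (a, b)) ∈ A a') ↔ e (toLex (a, b)) ∈ A a := by
    refine ⟨fun ⟨a', ha'⟩ => ?_, fun h => ⟨a, h⟩⟩
    obtain ⟨b', -, hb'⟩ := Finset.mem_image.1 (hA a' ha')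
    obtain ⟨rfl, -⟩ : a' = a ∧ b' = b := by simpa using hb'
    exact ha'
  obtain ⟨c, hcC, hc⟩ := hF (F.filter fun x => ∃ a, x ∈ A a) (Finset.filter_subset _ _)
  obtain ⟨𝒜, ℬ, h𝒜, hℬ, hcard𝒜ℬ, hs⟩ := hC c hcC
  obtain ⟨a, P, hP, Q, hQ, hPQ⟩ :=
    h𝒜.exists_block_subset_inter hℬ e.monotone (by simpa using hcard𝒜ℬ)
  obtain ⟨s, hsD, hcs⟩ := hs P hP Q hQ
  refine hAD a s hsD fun y hy => ?_
  obtain ⟨b, -, rfl⟩ := Finset.mem_image.1 hy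
  rw [← hcs _ (hPQ b), hc _ (heF _), Finset.mem_filter, exists_mem_iff]
  exact and_iff_right (heF _)

theorem monotone_tanh : Monotone tanh := fun x y hxy => by
  rw [← artanh_le_artanh_iff (tanh_bijOn.mapsTo (mem_univ x)) (tanh_bijOn.mapsTo (mem_univ y)),
    artanh_tanh, artanh_tanh]
  exact hxy

theorem psiR_exp_exp (a b : ℝ) : psiR (exp a) (exp b) = tanh ((b - a) / 4) := by
  have hsqrt : √(exp b / exp a) = exp ((b - a) / 4) * exp ((b - a) / 4) := by
    rw [← exp_sub, ← exp_half, ← exp_add]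
    ring_nf
  rw [psiR, if_neg (exp_pos a).ne', hsqrt, tanh_eq, exp_neg]
  field_simp

theorem isUpperSet_lt_tanh_div_four (u : ℝ) : IsUpperSet {z : ℝ | u < tanh (z / 4)} :=
  fun _ _ hzw hz => hz.trans_le (monotone_tanh (by linarith))

/-- `t` is piecewise the exponential of an element of `V`, on at most `k` intervals covering `X`.
The space `V` stands for the span of the functions `g₁, …, g_J`. -/
def IsPiecewiseExp {X : Type*} [Preorder X] (V : Submodule ℝ (X → ℝ)) (k : ℕ) (t : X → ℝ) : Prop :=
  ∃ 𝒜 : Finset (Set X), IsIntervalCover 𝒜 ∧ 𝒜.card ≤ k ∧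
    ∀ P ∈ 𝒜, ∃ f ∈ V, ∀ x ∈ P, t x = exp (f x)

theorem isPiecewiseExp_sum_ite {Y ι κ : Type*} [Preorder Y] [Fintype ι] [Fintype κ] {I : Set Y}
    (g : κ → I → ℝ) {P : ι → Set Y} (hP : ∀ i, (P i).OrdConnected)
    (hdisj : Pairwise (Function.onFun Disjoint P)) (hcover : I ⊆ ⋃ i, P i) {k : ℕ}
    (hk : Fintype.card ι ≤ k) (θ : ι → κ → ℝ) :
    IsPiecewiseExp (Submodule.span ℝ (range g)) k
      fun x : I => ∑ i, if (x : Y) ∈ P i then exp (∑ j, θ i j * g j x) else 0 := by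
  refine ⟨Finset.univ.image fun i => Subtype.val ⁻¹' P i, ⟨?_, fun x => ?_⟩,
    Finset.card_image_le.trans hk, ?_⟩
  · exact Finset.forall_mem_image.2 fun i _ => (hP i).preimage_mono (Subtype.mono_coe _)
  · obtain ⟨i, hi⟩ := mem_iUnion.1 (hcover x.2)
    exact ⟨_, Finset.mem_image_of_mem _ (Finset.mem_univ i), hi⟩
  · refine Finset.forall_mem_image.2 fun i _ => ⟨∑ j, θ i j • g j,
      sum_mem fun j _ => Submodule.smul_mem _ _ (Submodule.subset_span (mem_range_self j)),
      fun x (hx : (x : Y) ∈ P i) => ?_⟩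
    have hne (i') (hi' : i' ≠ i) : (x : Y) ∉ P i' := disjoint_right.1 (hdisj hi') hx
    dsimp only
    rw [Finset.sum_eq_single_of_mem i (Finset.mem_univ i) fun i' _ hi' => if_neg (hne i' hi'),
      if_pos hx]
    simp only [Finset.sum_apply, Pi.smul_apply, smul_eq_mul]

theorem statement_8_general {X : Type*} [LinearOrder X] (V : Submodule ℝ (X → ℝ))
    [FiniteDimensional ℝ V] {k : ℕ} (hk : 1 ≤ k) {S0 : Set (X → ℝ)}
    (hS0 : ∀ t ∈ S0, IsPiecewiseExp V k t) :
    WeakVCMajorLE {f : X → ℝ | ∃ t ∈ S0, ∃ t' ∈ S0, f = fun x => psiR (t x) (t' x)}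
      ((2 * k - 1) * (Module.finrank ℝ V + 2) - 1) := by
  obtain ⟨k, rfl⟩ := Nat.exists_eq_add_of_le' hk
  intro u
  refine ((vcdimLE_preimage_isUpperSet V).of_intervalCovers (n := 2 * k) ?_).mono
    (by rw [show 2 * (k + 1) - 1 = 2 * k + 1 by omega, Nat.succ_mul (2 * k), add_assoc]; omega)
  rintro _ ⟨_, ⟨t, ht, t', ht', rfl⟩, rfl⟩
  obtain ⟨𝒜, h𝒜, hcard𝒜, hexp⟩ := hS0 t ht
  obtain ⟨ℬ, hℬ, hcardℬ, hexp'⟩ := hS0 t' ht'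
  refine ⟨𝒜, ℬ, h𝒜, hℬ, by omega, fun P hP Q hQ => ?_⟩
  obtain ⟨f, hf, htf⟩ := hexp P hP
  obtain ⟨f', hf', htf'⟩ := hexp' Q hQ
  refine ⟨_, ⟨f' - f, sub_mem hf' hf, _, isUpperSet_lt_tanh_div_four u, rfl⟩, fun x hx => ?_⟩
  simp [htf x hx.1, htf' x hx.2, psiR_exp_exp]

theorem two_mul_sub_one_mul_sub_one_le_ceil {k J D : ℕ} (hD : D ≤ J) :
    (2 * k - 1) * (D + 2) - 1 ≤ ⌈(9.4 : ℝ) * k * (J + 2)⌉₊ := by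
  have hnat : (2 * k - 1) * (D + 2) - 1 ≤ 9 * k * (J + 2) :=
    (Nat.sub_le _ _).trans (Nat.mul_le_mul (by omega) (by omega))
  have hreal : ((9 * k * (J + 2) : ℕ) : ℝ) ≤ 9.4 * k * (J + 2) := by
    push_cast
    gcongr
    norm_num
  exact hnat.trans (Nat.cast_le.1 (hreal.trans (Nat.le_ceil _)))

theorem statement_8
    -- 𝐈 is an interval of ℝ (an order-connected subset, possibly ℝ itself)
    (I : Set ℝ) (hI : I.OrdConnected)
    (J : ℕ) (hJ : 1 ≤ J) (g : Fin J → I → ℝ)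
    (k : ℕ) (hk : 1 ≤ k)
    (S0 : Set (I → ℝ))
    -- every t ∈ S̄₀ is piecewise exponential on a partition of 𝐈 into at most k intervals
    (hform : ∀ t ∈ S0, ∃ m : ℕ, m ≤ k ∧ ∃ Jp : Fin m → Set ℝ,
      (∀ i, Jp i ⊆ I ∧ (Jp i).OrdConnected) ∧
      Pairwise (Function.onFun Disjoint Jp) ∧
      (⋃ i, Jp i) = I ∧
      ∃ θ : Fin m → Fin J → ℝ,
        t = fun x : I => ∑ i, if (x : ℝ) ∈ Jp i then Real.exp (∑ j, θ i j * g j x) else 0) :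
    WeakVCMajorLE
      {f : I → ℝ | ∃ t ∈ S0, ∃ t' ∈ S0, f = fun x => psiR (t x) (t' x)}
      ⌈(9.4 : ℝ) * k * (J + 2)⌉₊ := by
  have := FiniteDimensional.span_of_finite ℝ (finite_range g)
  have hrank : Module.finrank ℝ (Submodule.span ℝ (range g)) ≤ J := by
    simpa [Set.finrank] using finrank_range_le_card (R := ℝ) g
  refine (statement_8_general (Submodule.span ℝ (range g)) hk fun t ht => ?_).mono
    (two_mul_sub_one_mul_sub_one_le_ceil hrank)
  obtain ⟨m, hm, P, hP, hdisj, hcover, θ, rfl⟩ := hform t ht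
  exact isPiecewiseExp_sum_ite g (fun i => (hP i).2) hdisj hcover.ge (by simpa using hm) θ

end
end
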